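/- Let f ∈ ℝ[x,y,z] be homogeneous of degree d, hyperbolic with respect to a point e ∈ ℝ³ with f(e) > 0, and suppose the complex projective curve defined by f is smooth, i.e., f and its gradient have no common zero in ℂ³ ∖ {0}. Let g = e₁·∂f/∂x + e₂·∂f/∂y + e₃·∂f/∂z, and suppose f and g intersect transversally, i.e., at every common zero p ∈ ℂ³ ∖ {0} of f and g the gradients ∇f(p) and ∇g(p) are linearly independent. Let S ⊆ ℂ³ ∖ {0} be a set of common zeros of f and g such that every common zero of f and g in ℂ³ ∖ {0} is a nonzero scalar multiple of exactly one element of S ∪ conj(S) (where conj denotes coordinatewise complex conjugation), and no element of S is a nonzero scalar multiple of the conjugate of an element of S. Let a = (a₁, …, a_d) be a basis of the ℂ-vector space of homogeneous polynomials of degree d−1 in ℂ[x,y,z] vanishing at every point of S, with a₁ = g. Then there exists a unique triple (M₁, M₂, M₃) of Hermitian d×d complex matrices such that, setting M = xM₁ + yM₂ + zM₃, one has a·M = (f, 0, …, 0) and M·ā^T = (f, 0, …, 0)^T as identities of vectors of polynomials (where ā denotes applying complex conjugation to all coefficients of the entries of a). Moreover, for this solution there exists c ∈ ℝ with c > 0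 such that f = c·det(M) as polynomials, and the matrix e₁M₁ + e₂M₂ + e₃M₃ is positive definite. -/

import Mathlib

open scoped ComplexOrder

/-- The complexification of a real polynomial in three variables. -/
noncomputable def complexify (f : MvPolynomial (Fin 3) ℝ) : MvPolynomial (Fin 3) ℂ :=
  MvPolynomial.map (algebraMap ℝ ℂ) f

/-- `f` is hyperbolic with respect to `e ∈ ℝ³`: `f(e) ≠ 0` and for every `p ∈ ℝ³` all
complex roots of `t ↦ f(te + p)` are real. -/
def IsHyperbolic (f : MvPolynomial (Fin 3) ℝ) (e : Fin 3 → ℝ) : Prop :=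
  MvPolynomial.eval e f ≠ 0 ∧
    ∀ p : Fin 3 → ℝ, ∀ t : ℂ,
      MvPolynomial.eval (fun i => t * (e i : ℂ) + (p i : ℂ)) (complexify f) = 0 →
      t.im = 0

/-- The Hermitian pencil `x M₁ + y M₂ + z M₃` as a matrix of polynomials in `ℂ[x,y,z]`. -/
noncomputable def pencil {d : ℕ} (M₁ M₂ M₃ : Matrix (Fin d) (Fin d) ℂ) :
    Matrix (Fin d) (Fin d) (MvPolynomial (Fin 3) ℂ) := fun i j =>
  MvPolynomial.X 0 * MvPolynomial.C (M₁ i j) +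
    MvPolynomial.X 1 * MvPolynomial.C (M₂ i j) +
    MvPolynomial.X 2 * MvPolynomial.C (M₃ i j)

/-- Coordinatewise complex conjugation on `ℂ³`. -/
def conjPt (p : Fin 3 → ℂ) : Fin 3 → ℂ := fun i => (starRingEnd ℂ) (p i)

/-!
Since no common zero of `f` and `g` is real, `f` has `d` simple real zeros `te + q` on every real
line with direction `e` that misses the origin. Let `W` be the matrix of the values of `aⱼ / g` at
these zeros, and `D` the diagonal matrix of their parameters `t`. The entries of `WᴴW` and `WᴴDW`
are the sums of `āᵢaⱼ / g²` and `t āᵢaⱼ / g²` over the zeros. The product `āᵢaⱼ` vanishes at all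
common zeros of `f` and `g`, which are transversal, so by Max Noether's theorem `ℓᵏ āᵢaⱼ` lies in
the ideal `(f, g)` for every linear form `ℓ`; this cancels one factor `g`, and Lagrange
interpolation then shows that `WᴴDW` is linear in `q`. Hence there is a linear pencil `A` with
`WᴴW = A(e)` and `WᴴDW = -A(q)`.

Linear independence of `a` makes `A(e)` positive definite and `W` invertible, and
`M(x) = A(e)⁻¹ A(x) A(e)⁻¹` solves the system, with `det M` read off from `W` and `D`. For
uniqueness, let `Δ` be the difference of two solutions. As `aΔ = 0` at the zeros of `f`,
`D(WΔ(e)) = -WΔ(q)`, so both `WΔ(e)Wᴴ` and its product with `D` are Hermitian. Therefore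
`WΔ(e)Wᴴ` is diagonal, and it vanishes because its column sums do.
-/

section Homogeneous

open MvPolynomial

variable {σ R S : Type*} [CommSemiring R] [CommSemiring S] [Algebra R S]

theorem aeval_smul_of_isHomogeneous {p : MvPolynomial σ R} {n : ℕ} (hp : p.IsHomogeneous n)
    (c : S) (x : σ → S) : aeval (c • x) p = c ^ n * aeval x p := by
  rw [aeval_def, aeval_def, eval₂_eq, eval₂_eq, Finset.mul_sum]
  refine Finset.sum_congr rfl fun m hm => ?_
  have hdeg : ∑ i ∈ m.support, m i = n :=
    (hp.degree_eq_sum_deg_support hm).symm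
  simp only [Pi.smul_apply, smul_eq_mul, mul_pow, Finset.prod_mul_distrib,
    Finset.prod_pow_eq_pow_sum, hdeg]
  ring

theorem eval_smul_of_isHomogeneous {p : MvPolynomial σ R} {n : ℕ} (hp : p.IsHomogeneous n)
    (c : R) (x : σ → R) : eval (c • x) p = c ^ n * eval x p := by
  simpa only [← coe_aeval_eq_eval] using! aeval_smul_of_isHomogeneous hp c x

theorem coeff_aeval_C_smul_X (c : R) (p : MvPolynomial σ R) (m : σ →₀ ℕ) :
    coeff m (aeval ((C c : MvPolynomial σ R) • X) p) = c ^ m.degree * coeff m p := by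
  classical
  induction p using MvPolynomial.induction_on' with
  | monomial s a =>
    rw [aeval_smul_of_isHomogeneous (isHomogeneous_monomial a rfl), aeval_X_left_apply, ← C_pow,
      coeff_C_mul, coeff_monomial]
    split_ifs with hsm
    · rw [hsm]
    · simp only [mul_zero]
  | add p q hp hq => rw [map_add, coeff_add, hp, hq, coeff_add, mul_add]

theorem isHomogeneous_of_aeval_C_smul_X_eq {R : Type*} [CommRing R] [IsDomain R]
    {p : MvPolynomial σ R} {n : ℕ} {c : R} (hc : ∀ m, c ^ m = c ^ n → m = n)
    (hp : aeval ((C c : MvPolynomial σ R) • X) p = C (c ^ n) * p) : p.IsHomogeneous n := by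
  intro m hm
  have hcoeff : c ^ m.degree * coeff m p = c ^ n * coeff m p := by
    rw [← coeff_aeval_C_smul_X, hp, coeff_C_mul]
  have hdeg := hc m.degree (mul_right_cancel₀ hm hcoeff)
  rwa [Finsupp.degree_eq_weight_one] at hdeg

end Homogeneous

section Noether

open MvPolynomial

theorem det_mul_mem_of_mulVec_mem {R m : Type*} [CommRing R] [Fintype m] [DecidableEq m]
    {I : Ideal R} {M : Matrix m m R} {y : m → R} (hM : ∀ i, (M.mulVec y) i ∈ I) (j : m) :
    M.det * y j ∈ I := by
  have hdet : M.det • y = M.adjugate.mulVec (M.mulVec y) := by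
    rw [Matrix.mulVec_mulVec, Matrix.adjugate_mul, Matrix.smul_mulVec, Matrix.one_mulVec]
  rw [← smul_eq_mul, ← Pi.smul_apply, hdet]
  exact I.sum_mem fun i _ => I.mul_mem_left _ (hM i)

theorem exists_sub_aeval_eq_sum_mul_sub {σ R : Type*} [CommRing R] [Fintype σ]
    (p : MvPolynomial σ R) {u : σ → MvPolynomial σ R} {x : σ → R} (hu : ∀ i, eval x (u i) = x i) :
    ∃ A : σ → MvPolynomial σ R, p - aeval u p = ∑ i, A i * (X i - u i) ∧
      ∀ i, eval x (A i) = eval x (pderiv i p) := by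
  classical
  have eval_aeval (p : MvPolynomial σ R) : eval x (aeval u p) = eval x p := by
    induction p using MvPolynomial.induction_on <;> simp_all [algebraMap_eq]
  induction p using MvPolynomial.induction_on with
  | C r => exact ⟨0, by simp [algebraMap_eq], by simp⟩
  | add p q hp hq =>
    obtain ⟨A, hA, hAx⟩ := hp
    obtain ⟨B, hB, hBx⟩ := hq
    refine ⟨A + B, ?_, fun i => by simp [hAx, hBx]⟩
    simp only [map_add, Pi.add_apply, add_mul, Finset.sum_add_distrib, ← hA, ← hB]
    ring
  | mul_X p k hp =>
    obtain ⟨A, hA, hAx⟩ := hp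
    refine ⟨fun i => A i * X k + if i = k then aeval u p else 0, ?_, fun i => ?_⟩
    · simp only [add_mul, Finset.sum_add_distrib, ite_mul, zero_mul, Finset.sum_ite_eq',
        Finset.mem_univ, if_true, mul_right_comm _ (X k), ← Finset.sum_mul, ← hA, map_mul, aeval_X]
      ring
    · rcases eq_or_ne i k with rfl | hik
      · simp only [map_add, map_mul, if_true, eval_X, hAx, eval_aeval, Derivation.leibniz,
          pderiv_X_self, smul_eq_mul, mul_one]
        ring
      · simp [hAx, hik, pderiv_X_of_ne hik.symm, mul_comm]

variable {K : Type*} [Field K] {n : ℕ}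

theorem det_jacobian_cons_ne_zero {F : Fin n → MvPolynomial (Fin (n + 1)) K} {deg : Fin n → ℕ}
    (hF : ∀ i, (F i).IsHomogeneous (deg i)) {ℓ : MvPolynomial (Fin (n + 1)) K}
    (hℓ : ℓ.IsHomogeneous 1) {x : Fin (n + 1) → K} (hℓx : eval x ℓ ≠ 0)
    (hFx : ∀ i, eval x (F i) = 0)
    (hgrad : LinearIndependent K fun i j => eval x (pderiv j (F i))) :
    (Matrix.of fun i j => eval x (pderiv j (Matrix.vecCons ℓ F i))).det ≠ 0 := by
  have euler {p : MvPolynomial (Fin (n + 1)) K} {m : ℕ} (hp : p.IsHomogeneous m) :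
      ∑ j, eval x (pderiv j p) * x j = m * eval x p := by
    simpa [mul_comm] using congrArg (eval x) hp.sum_X_mul_pderiv
  rw [Ne, ← Matrix.exists_vecMul_eq_zero_iff]
  rintro ⟨c, hc, hcM⟩
  have hcol (j : Fin (n + 1)) :
      c 0 * eval x (pderiv j ℓ) + ∑ i, c (Fin.succ i) * eval x (pderiv j (F i)) = 0 := by
    simpa [Matrix.vecMul, dotProduct, Fin.sum_univ_succ] using congrFun hcM j
  have hc0 : c 0 = 0 := by
    have hsum : ∑ j, (c 0 * eval x (pderiv j ℓ) +
        ∑ i, c (Fin.succ i) * eval x (pderiv j (F i))) * x j = 0 :=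
      Finset.sum_eq_zero fun j _ => by rw [hcol, zero_mul]
    simp only [add_mul, Finset.sum_add_distrib, Finset.sum_mul, mul_assoc] at hsum
    rw [Finset.sum_comm, ← Finset.mul_sum, euler hℓ] at hsum
    simpa [← Finset.mul_sum, euler (hF _), hFx, hℓx] using hsum
  refine hc (funext fun i => Fin.cases hc0 (fun i => ?_) i)
  refine Fintype.linearIndependent_iff.mp hgrad (fun i => c (Fin.succ i)) (funext fun j => ?_) i
  simpa [hc0] using hcol j

theorem exists_mul_mem_span_eval_ne_zero {F : Fin n → MvPolynomial (Fin (n + 1)) K}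
    {deg : Fin n → ℕ} (hF : ∀ i, (F i).IsHomogeneous (deg i))
    {ℓ h : MvPolynomial (Fin (n + 1)) K} (hℓ : ℓ.IsHomogeneous 1) {m : ℕ}
    (hh : h.IsHomogeneous m) {x : Fin (n + 1) → K} (hℓx : eval x ℓ ≠ 0)
    (hFx : ∀ i, eval x (F i) = 0)
    (hgrad : LinearIndependent K fun i j => eval x (pderiv j (F i))) (hhx : eval x h = 0) :
    ∃ D, D * h ∈ Ideal.span (Set.range F) ∧ eval x D ≠ 0 := by
  -- `u` is the projection onto the line through `x` along the hyperplanes on which `ℓ` is constant.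
  let u : Fin (n + 1) → MvPolynomial (Fin (n + 1)) K := (C (eval x ℓ)⁻¹ * ℓ) • fun i => C (x i)
  have aeval_u {p : MvPolynomial (Fin (n + 1)) K} {m : ℕ} (hp : p.IsHomogeneous m) :
      aeval u p = (C (eval x ℓ)⁻¹ * ℓ) ^ m * C (eval x p) := by
    rw [aeval_smul_of_isHomogeneous hp]
    congr 1
    exact aeval_algebraMap_apply _ x p
  have hu (i : Fin (n + 1)) : eval x (u i) = x i := by simp [u, hℓx]
  choose A hA hAx using fun i => exists_sub_aeval_eq_sum_mul_sub (Matrix.vecCons ℓ F i) hu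
  obtain ⟨B, hB, -⟩ := exists_sub_aeval_eq_sum_mul_sub h hu
  refine ⟨(Matrix.of A).det, ?_, ?_⟩
  · have hAy (i : Fin (n + 1)) :
        ((Matrix.of A).mulVec fun j => X j - u j) i ∈ Ideal.span (Set.range F) := by
      change ∑ j, A i j * (X j - u j) ∈ _
      rw [← hA]
      refine Fin.cases ?_ (fun i => ?_) i
      · rw [Matrix.cons_val_zero, aeval_u hℓ, pow_one, mul_right_comm, ← C_mul, inv_mul_cancel₀ hℓx,
          C_1, one_mul, sub_self]
        exact zero_mem _
      · rw [Matrix.cons_val_succ, aeval_u (hF i), hFx, C_0, mul_zero, sub_zero]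
        exact Ideal.subset_span ⟨i, rfl⟩
    have hh_eq : h = ∑ j, B j * (X j - u j) := by
      rw [← hB, aeval_u hh, hhx, C_0, mul_zero, sub_zero]
    rw [hh_eq, Finset.mul_sum]
    refine Ideal.sum_mem _ fun j _ => ?_
    rw [mul_left_comm]
    exact Ideal.mul_mem_left _ _ (det_mul_mem_of_mulVec_mem hAy j)
  · have hdet := det_jacobian_cons_ne_zero hF hℓ hℓx hFx hgrad
    rw [RingHom.map_det]
    convert hdet using 2
    ext i j
    exact hAx i j

theorem exists_pow_mul_mem_span_of_isHomogeneous [IsAlgClosed K]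
    {F : Fin n → MvPolynomial (Fin (n + 1)) K} {deg : Fin n → ℕ}
    (hF : ∀ i, (F i).IsHomogeneous (deg i)) {ℓ h : MvPolynomial (Fin (n + 1)) K}
    (hℓ : ℓ.IsHomogeneous 1) {m : ℕ} (hh : h.IsHomogeneous m)
    (hgrad : ∀ x, eval x ℓ ≠ 0 → (∀ i, eval x (F i) = 0) →
      LinearIndependent K fun i j => eval x (pderiv j (F i)))
    (hzero : ∀ x, eval x ℓ ≠ 0 → (∀ i, eval x (F i) = 0) → eval x h = 0) :
    ∃ k, ℓ ^ k * h ∈ Ideal.span (Set.range F) := by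
  let J : Ideal (MvPolynomial (Fin (n + 1)) K) := (Ideal.span (Set.range F)).colon {h}
  have mem_J {D : MvPolynomial (Fin (n + 1)) K} : D ∈ J ↔ D * h ∈ Ideal.span (Set.range F) := by
    rw [Submodule.mem_colon_singleton, smul_eq_mul]
  suffices hrad : ℓ ∈ J.radical by
    obtain ⟨k, hk⟩ := hrad
    exact ⟨k, mem_J.mp hk⟩
  rw [← vanishingIdeal_zeroLocus_eq_radical (K := K)]
  intro x hx
  by_contra hℓx
  replace hℓx : eval x ℓ ≠ 0 := by simpa using hℓx
  have hJx {D} (hD : D ∈ J) : eval x D = 0 := by simpa using hx D hD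
  have hFx (i : Fin n) : eval x (F i) = 0 :=
    hJx (mem_J.mpr (Ideal.mul_mem_right _ _ (Ideal.subset_span ⟨i, rfl⟩)))
  obtain ⟨D, hD, hDx⟩ := exists_mul_mem_span_eval_ne_zero hF hℓ hh hℓx hFx (hgrad x hℓx hFx)
    (hzero x hℓx hFx)
  exact hDx (hJx (mem_J.mpr hD))

end Noether

section Lagrange

open Polynomial

variable {K ι : Type*} [Field K] {s : Finset ι} {v : ι → K}

theorem eq_C_leadingCoeff_mul_nodal {L : K[X]} (hv : Set.InjOn v s)
    (hdeg : L.natDegree ≤ s.card) (hroot : ∀ i ∈ s, L.eval (v i) = 0) :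
    L = C L.leadingCoeff * Lagrange.nodal s v := by
  have hdvd : Lagrange.nodal s v ∣ L :=
    Finset.prod_dvd_of_coprime
      (fun i hi j hj hij =>
        isCoprime_X_sub_C_of_isUnit_sub (sub_ne_zero_of_ne (hv.ne hi hj hij)).isUnit)
      fun i hi => dvd_iff_isRoot.mpr (hroot i hi)
  exact eq_leadingCoeff_mul_of_monic_of_dvd_of_natDegree_le Lagrange.nodal_monic hdvd
    (by rwa [Lagrange.natDegree_nodal])

theorem sum_eval_div_eval_derivative {L β : K[X]} (hv : Set.InjOn v s)
    (hL : L.natDegree ≤ s.card) (hroot : ∀ i ∈ s, L.eval (v i) = 0) (hβ : β.degree < s.card) :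
    ∑ i ∈ s, β.eval (v i) / L.derivative.eval (v i) = β.coeff (s.card - 1) / L.leadingCoeff := by
  classical
  rw [Lagrange.coeff_eq_sum hv hβ, Finset.sum_div]
  refine Finset.sum_congr rfl fun i hi => ?_
  rw [eq_C_leadingCoeff_mul_nodal hv hL hroot, derivative_C_mul, eval_C_mul, leadingCoeff_mul,
    leadingCoeff_C, Lagrange.nodal_monic.leadingCoeff, mul_one,
    Lagrange.eval_nodal_derivative_eval_node_eq hi, Lagrange.eval_nodal, div_div, mul_comm]

theorem exists_weights_eval_eq_sum {L : K[X]} (hL0 : L ≠ 0) (hv : Set.InjOn v s)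
    (hL : L.natDegree ≤ s.card) (hroot : ∀ i ∈ s, L.eval (v i) = 0) (x : K) :
    ∃ c : ι → K, (∀ i ∈ s, c i * (x - v i) = L.eval x) ∧ ∀ β : K[X], β.degree < s.card →
      β.eval x = ∑ i ∈ s, c i * (β.eval (v i) / L.derivative.eval (v i)) := by
  classical
  have hnodal := eq_C_leadingCoeff_mul_nodal hv hL hroot
  refine ⟨fun i => L.leadingCoeff * (Lagrange.nodal (s.erase i) v).eval x, fun i hi => ?_,
    fun β hβ => ?_⟩
  · conv_rhs => rw [hnodal, Lagrange.nodal_eq_mul_nodal_erase hi]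
    simp only [eval_mul, eval_C, eval_sub, eval_X]
    ring
  · conv_lhs => rw [Lagrange.eq_interpolate hv hβ, Lagrange.interpolate_eq_sum, eval_finsetSum]
    refine Finset.sum_congr rfl fun i hi => ?_
    have hderiv : L.derivative.eval (v i) =
        L.leadingCoeff * (Lagrange.nodal (s.erase i) v).eval (v i) := by
      conv_lhs => rw [hnodal, derivative_C_mul, eval_C_mul,
        Lagrange.eval_nodal_derivative_eval_node_eq hi]
    have hlc : L.leadingCoeff ≠ 0 := leadingCoeff_ne_zero.mpr hL0
    rw [hderiv, eval_C_mul, ← Lagrange.nodal_eq, ← Lagrange.eval_nodal]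
    field_simp

end Lagrange

section RestrictLine

open Polynomial

variable {σ K R : Type*} [CommRing K] [CommRing R] [Algebra K R]

/-- The restriction `f(te + q)` of a polynomial `f` to the line through `q` with direction `e`, as
a univariate polynomial in `t`. The point `q` may have coordinates in an extension of the
coefficient ring, so that `q` can be taken to be the generic point. -/
noncomputable def restrictLine (e q : σ → R) : MvPolynomial σ K →ₐ[K] R[X] :=
  MvPolynomial.aeval fun i => C (e i) * X + C (q i)

variable {e q : σ → R}

theorem eval_restrictLine (f : MvPolynomial σ K) (t : R) :
    (restrictLine e q f).eval t = MvPolynomial.aeval (t • e + q) f := by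
  induction f using MvPolynomial.induction_on <;> simp_all [restrictLine, mul_comm t]

theorem map_eval_restrictLine_C_X (f : MvPolynomial σ K) :
    (restrictLine (fun i => MvPolynomial.C (e i)) MvPolynomial.X f).map (MvPolynomial.eval q) =
      restrictLine e q f := by
  induction f using MvPolynomial.induction_on <;>
    simp_all [restrictLine, MvPolynomial.algebraMap_apply]

theorem derivative_restrictLine [Fintype σ] (f : MvPolynomial σ K) :
    derivative (restrictLine e q f) =
      ∑ i, C (e i) * restrictLine e q (MvPolynomial.pderiv i f) := by
  classical
  induction f using MvPolynomial.induction_on with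
  | C c => simp [restrictLine]
  | add f g hf hg => simp only [map_add, hf, hg, mul_add, Finset.sum_add_distrib]
  | mul_X f k hf =>
    have hX : derivative (restrictLine e q (MvPolynomial.X k : MvPolynomial σ K)) = C (e k) := by
      simp [restrictLine]
    simp only [map_mul, derivative_mul, hf, hX, Derivation.leibniz, smul_eq_mul, map_add, mul_add,
      MvPolynomial.pderiv_X, Finset.sum_add_distrib, Finset.sum_mul, Pi.single_apply]
    simp [mul_comm, mul_left_comm, apply_ite, add_comm]

theorem natDegree_prod_line_pow_le (s : Finset σ) (m : σ → ℕ) :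
    (∏ i ∈ s, (C (e i) * X + C (q i)) ^ m i).natDegree ≤ ∑ i ∈ s, m i :=
  (natDegree_prod_le s _).trans <| Finset.sum_le_sum fun i _ => by
    simpa using natDegree_pow_le_of_le (m i) (natDegree_linear_le (a := e i) (b := q i))

theorem coeff_prod_line_pow (s : Finset σ) (m : σ → ℕ) :
    (∏ i ∈ s, (C (e i) * X + C (q i)) ^ m i).coeff (∑ i ∈ s, m i) = ∏ i ∈ s, e i ^ m i := by
  classical
  induction s using Finset.induction_on with
  | empty => simp
  | insert k s hk ih =>
    have hline := natDegree_linear_le (a := e k) (b := q k)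
    have hcoeff := coeff_pow_of_natDegree_le hline (m := m k)
    have hpow := natDegree_pow_le_of_le (m k) hline
    rw [mul_one] at hcoeff hpow
    rw [Finset.prod_insert hk, Finset.sum_insert hk, Finset.prod_insert hk,
      coeff_mul_add_eq_of_natDegree_le hpow (natDegree_prod_line_pow_le s m), ih, hcoeff]
    simp

theorem restrictLine_eq_sum (f : MvPolynomial σ K) :
    restrictLine e q f = ∑ m ∈ f.support, C (algebraMap K R (f.coeff m)) *
      ∏ i ∈ m.support, (C (e i) * X + C (q i)) ^ m i := by
  rw [restrictLine, MvPolynomial.aeval_def, MvPolynomial.eval₂_eq]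
  rfl

theorem natDegree_restrictLine_le {f : MvPolynomial σ K} {n : ℕ} (hf : f.IsHomogeneous n) :
    (restrictLine e q f).natDegree ≤ n := by
  rw [restrictLine_eq_sum]
  refine natDegree_sum_le_of_forall_le _ _ fun m hm => ?_
  rw [hf.degree_eq_sum_deg_support hm]
  exact (natDegree_C_mul_le _ _).trans (natDegree_prod_line_pow_le _ _)

theorem degree_restrictLine_lt {f : MvPolynomial σ K} {m n : ℕ} (hf : f.IsHomogeneous m)
    (hmn : m < n) : (restrictLine e q f).degree < n :=
  degree_le_natDegree.trans_lt <| by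
    exact_mod_cast (natDegree_restrictLine_le hf).trans_lt hmn

theorem coeff_restrictLine {f : MvPolynomial σ K} {n : ℕ} (hf : f.IsHomogeneous n) :
    (restrictLine e q f).coeff n = MvPolynomial.aeval e f := by
  rw [restrictLine_eq_sum, finsetSum_coeff, MvPolynomial.aeval_def, MvPolynomial.eval₂_eq]
  refine Finset.sum_congr rfl fun m hm => ?_
  rw [coeff_C_mul, hf.degree_eq_sum_deg_support hm, coeff_prod_line_pow]

end RestrictLine

section RealPoints

open MvPolynomial

variable {σ : Type*}

/-- A real point, regarded as a complex one. -/
def toComplex (p : σ → ℝ) : σ → ℂ := fun i => p i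

theorem toComplex_add (p q : σ → ℝ) : toComplex (p + q) = toComplex p + toComplex q :=
  funext fun i => Complex.ofReal_add (p i) (q i)

theorem toComplex_smul (c : ℝ) (p : σ → ℝ) : toComplex (c • p) = (c : ℂ) • toComplex p :=
  funext fun i => Complex.ofReal_mul c (p i)

theorem aeval_toComplex (p : σ → ℝ) (f : MvPolynomial σ ℝ) :
    aeval (toComplex p) f = ((eval p f : ℝ) : ℂ) :=
  aeval_algebraMap_apply ℂ p f

theorem eval_toComplex_map (p : σ → ℝ) (f : MvPolynomial σ ℝ) :
    eval (toComplex p) (map (algebraMap ℝ ℂ) f) = ((eval p f : ℝ) : ℂ) := by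
  rw [eval_map, ← aeval_def, aeval_toComplex]

theorem eval_toComplex_smul {p : MvPolynomial σ ℂ} {n : ℕ} (hp : p.IsHomogeneous n) (c : ℝ)
    (x : σ → ℝ) : eval (toComplex (c • x)) p = (c : ℂ) ^ n * eval (toComplex x) p := by
  rw [toComplex_smul, eval_smul_of_isHomogeneous hp]

theorem eval_restrictLine_toComplex (e q : σ → ℝ) (t : ℝ) (p : MvPolynomial σ ℂ) :
    (restrictLine (toComplex e) (toComplex q) p).eval (t : ℂ) = eval (toComplex (t • e + q)) p := by
  rw [eval_restrictLine, toComplex_add, toComplex_smul]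
  rfl

theorem eval_map_restrictLine (f : MvPolynomial σ ℝ) (e q : σ → ℝ) (t : ℝ) :
    ((restrictLine e q f).map Complex.ofRealHom).eval (t : ℂ) = (eval (t • e + q) f : ℝ) := by
  refine (Polynomial.eval_map_apply Complex.ofRealHom t).trans ?_
  rw [eval_restrictLine]
  rfl

theorem eq_of_eval_toComplex_eq_of_notMem [Finite σ] {V : Submodule ℝ (σ → ℝ)} (hV : V ≠ ⊤)
    {p r : MvPolynomial σ ℂ} (hpr : ∀ x ∉ V, eval (toComplex x) p = eval (toComplex x) r) :
    p = r := by
  classical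
  cases nonempty_fintype σ
  have ext_real {p r : MvPolynomial σ ℂ}
      (h : ∀ x, eval (toComplex x) p = eval (toComplex x) r) : p = r := by
    refine funext_set (fun _ => Set.range Complex.ofReal)
      (fun _ => Set.infinite_range_of_injective Complex.ofReal_injective) fun x hx => ?_
    choose y hy using fun i => hx i trivial
    obtain rfl : toComplex y = x := funext hy
    exact h y
  obtain ⟨φ, hφ, hVφ⟩ := V.exists_le_ker_of_lt_top hV.lt_top
  let ℓ : MvPolynomial σ ℂ := ∑ i, C (φ (Pi.single i 1) : ℂ) * X i
  have eval_ℓ (x : σ → ℝ) : eval (toComplex x) ℓ = φ x := by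
    conv_rhs => rw [pi_eq_sum_univ' x]
    simp [ℓ, toComplex, mul_comm]
  have hℓ : ℓ ≠ 0 := by
    rintro h0
    refine hφ (LinearMap.ext fun x => ?_)
    simpa [h0] using (eval_ℓ x).symm
  refine mul_left_cancel₀ hℓ (ext_real fun x => ?_)
  by_cases hx : x ∈ V
  · simp [eval_ℓ, LinearMap.mem_ker.mp (hVφ hx)]
  · rw [map_mul, map_mul, hpr x hx]

end RealPoints

section StrictlyHyperbolic

open MvPolynomial

variable {σ : Type*} [Fintype σ]

/-- The derivative of the polynomial `f` in the direction `e`. -/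
noncomputable def dirDeriv {R : Type*} [CommSemiring R] (e : σ → R) (f : MvPolynomial σ R) :
    MvPolynomial σ R :=
  ∑ i, C (e i) * pderiv i f

theorem isHomogeneous_dirDeriv {R : Type*} [CommSemiring R] (e : σ → R) {f : MvPolynomial σ R}
    {n : ℕ} (hf : f.IsHomogeneous n) : (dirDeriv e f).IsHomogeneous (n - 1) :=
  IsHomogeneous.sum _ _ _ fun i _ => by
    simpa using (isHomogeneous_C σ (e i)).mul (hf.pderiv (i := i))

theorem eval_derivative_restrictLine {R : Type*} [CommRing R] (e q : σ → R) (f : MvPolynomial σ R)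
    (t : R) :
    (restrictLine e q f).derivative.eval t = eval (t • e + q) (dirDeriv e f) := by
  simp only [derivative_restrictLine, Polynomial.eval_finsetSum, Polynomial.eval_mul,
    Polynomial.eval_C, eval_restrictLine, dirDeriv, map_sum, map_mul, eval_C]
  rfl

theorem eval_derivative_map_restrictLine (f : MvPolynomial σ ℝ) (e q : σ → ℝ) (t : ℝ) :
    ((restrictLine e q f).map Complex.ofRealHom).derivative.eval (t : ℂ) =
      (eval (t • e + q) (dirDeriv e f) : ℝ) := by
  rw [Polynomial.derivative_map, ← eval_derivative_restrictLine]
  exact Polynomial.eval_map_apply Complex.ofRealHom t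

/-- The form `f` of degree `d` is positive at `e` and has only real and simple zeros on the lines
with direction `e` that miss the origin. -/
structure IsStrictlyHyperbolic (f : MvPolynomial σ ℝ) (e : σ → ℝ) (d : ℕ) : Prop where
  isHomogeneous : f.IsHomogeneous d
  eval_pos : 0 < eval e f
  splits : ∀ q, (restrictLine e q f).Splits
  eval_dirDeriv_ne_zero : ∀ p, p ≠ 0 → eval p f = 0 → eval p (dirDeriv e f) ≠ 0

/-- The zeros of the form `f` on the line through `q` with direction `e`, given by their
parameters `t` in `te + q`. -/
noncomputable def lineRoots (f : MvPolynomial σ ℝ) (e q : σ → ℝ) : Finset ℝ :=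
  (restrictLine e q f).roots.toFinset

namespace IsStrictlyHyperbolic

variable {f : MvPolynomial σ ℝ} {e q : σ → ℝ} {d : ℕ}

theorem ne_zero (hf : IsStrictlyHyperbolic f e d) (hd : 0 < d) : e ≠ 0 := by
  rintro rfl
  have h0 := hf.eval_pos
  rw [← zero_smul ℝ (0 : σ → ℝ), eval_smul_of_isHomogeneous hf.isHomogeneous, zero_pow hd.ne',
    zero_mul] at h0
  exact h0.false

theorem coeff_restrictLine_eq (hf : IsStrictlyHyperbolic f e d) :
    (restrictLine e q f).coeff d = eval e f := by
  rw [coeff_restrictLine hf.isHomogeneous]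
  rfl

theorem natDegree_restrictLine_eq (hf : IsStrictlyHyperbolic f e d) :
    (restrictLine e q f).natDegree = d :=
  Polynomial.natDegree_eq_of_le_of_coeff_ne_zero (natDegree_restrictLine_le hf.isHomogeneous)
    (hf.coeff_restrictLine_eq.trans_ne hf.eval_pos.ne')

theorem leadingCoeff_restrictLine_eq (hf : IsStrictlyHyperbolic f e d) :
    (restrictLine e q f).leadingCoeff = eval e f := by
  rw [Polynomial.leadingCoeff, hf.natDegree_restrictLine_eq, hf.coeff_restrictLine_eq]

theorem restrictLine_ne_zero (hf : IsStrictlyHyperbolic f e d) : restrictLine e q f ≠ 0 :=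
  Polynomial.leadingCoeff_ne_zero.mp (hf.leadingCoeff_restrictLine_eq.trans_ne hf.eval_pos.ne')

theorem mem_lineRoots (hf : IsStrictlyHyperbolic f e d) {t : ℝ} :
    t ∈ lineRoots f e q ↔ eval (t • e + q) f = 0 := by
  rw [lineRoots, Multiset.mem_toFinset, Polynomial.mem_roots hf.restrictLine_ne_zero,
    Polynomial.IsRoot, eval_restrictLine]
  rfl

theorem eval_dirDeriv_line_ne_zero (hf : IsStrictlyHyperbolic f e d)
    (hq : q ∉ Submodule.span ℝ {e}) {t : ℝ} (ht : t ∈ lineRoots f e q) :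
    eval (t • e + q) (dirDeriv e f) ≠ 0 := by
  refine hf.eval_dirDeriv_ne_zero _ (fun h0 => hq ?_) (hf.mem_lineRoots.mp ht)
  rw [← neg_eq_of_add_eq_zero_right h0]
  exact neg_mem (Submodule.smul_mem _ t (Submodule.mem_span_singleton_self e))

theorem card_lineRoots (hf : IsStrictlyHyperbolic f e d) (hq : q ∉ Submodule.span ℝ {e}) :
    (lineRoots f e q).card = d := by
  have hnodup : (restrictLine e q f).roots.Nodup := by
    rw [Multiset.nodup_iff_count_le_one]
    intro t
    rw [Polynomial.count_roots]
    by_contra! hmult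
    obtain ⟨hroot, hderiv⟩ :=
      (Polynomial.one_lt_rootMultiplicity_iff_isRoot hf.restrictLine_ne_zero).mp hmult
    have ht : t ∈ lineRoots f e q :=
      Multiset.mem_toFinset.mpr ((Polynomial.mem_roots hf.restrictLine_ne_zero).mpr hroot)
    rw [Polynomial.IsRoot, eval_derivative_restrictLine] at hderiv
    exact hf.eval_dirDeriv_line_ne_zero hq ht hderiv
  rw [lineRoots, Multiset.toFinset_card_of_nodup hnodup, ← (hf.splits q).natDegree_eq_card_roots,
    hf.natDegree_restrictLine_eq]

theorem natDegree_map_restrictLine (hf : IsStrictlyHyperbolic f e d)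
    (hq : q ∉ Submodule.span ℝ {e}) :
    ((restrictLine e q f).map Complex.ofRealHom).natDegree = (lineRoots f e q).card := by
  rw [Polynomial.natDegree_map, hf.natDegree_restrictLine_eq, hf.card_lineRoots hq]

theorem eval_map_restrictLine_eq_zero (hf : IsStrictlyHyperbolic f e d) (t : ℝ)
    (ht : t ∈ lineRoots f e q) : ((restrictLine e q f).map Complex.ofRealHom).eval (t : ℂ) = 0 := by
  rw [eval_map_restrictLine, hf.mem_lineRoots.mp ht, Complex.ofReal_zero]

theorem sum_lineRoots_eval_div (hf : IsStrictlyHyperbolic f e d)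
    (hq : q ∉ Submodule.span ℝ {e}) {β : Polynomial ℂ} (hβ : β.degree < d) :
    ∑ t ∈ lineRoots f e q, β.eval (t : ℂ) / (eval (t • e + q) (dirDeriv e f) : ℝ) =
      β.coeff (d - 1) / (eval e f : ℝ) := by
  rw [← hf.card_lineRoots hq] at hβ
  have hsum := sum_eval_div_eval_derivative Complex.ofReal_injective.injOn
    (hf.natDegree_map_restrictLine hq).le hf.eval_map_restrictLine_eq_zero hβ
  rw [Polynomial.leadingCoeff_map, hf.leadingCoeff_restrictLine_eq, hf.card_lineRoots hq] at hsum
  simpa only [eval_derivative_map_restrictLine] using! hsum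

theorem exists_weights_lineRoots (hf : IsStrictlyHyperbolic f e d)
    (hq : q ∉ Submodule.span ℝ {e}) :
    ∃ c : ℝ → ℂ, (∀ t ∈ lineRoots f e q, c t * -t = (eval q f : ℝ)) ∧
      ∀ β : Polynomial ℂ, β.degree < d → β.eval 0 =
        ∑ t ∈ lineRoots f e q, c t * (β.eval (t : ℂ) / (eval (t • e + q) (dirDeriv e f) : ℝ)) := by
  have hL0 : (restrictLine e q f).map Complex.ofRealHom ≠ 0 :=
    (Polynomial.map_ne_zero_iff Complex.ofRealHom.injective).mpr hf.restrictLine_ne_zero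
  obtain ⟨c, hc, hsum⟩ := exists_weights_eval_eq_sum hL0 Complex.ofReal_injective.injOn
    (hf.natDegree_map_restrictLine hq).le hf.eval_map_restrictLine_eq_zero 0
  have heval_zero := eval_map_restrictLine f e q 0
  rw [zero_smul, zero_add, Complex.ofReal_zero] at heval_zero
  simp only [zero_sub, heval_zero, hf.card_lineRoots hq, eval_derivative_map_restrictLine]
    at hc hsum
  exact ⟨c, hc, hsum⟩

theorem eval_eq_mul_prod_lineRoots (hf : IsStrictlyHyperbolic f e d)
    (hq : q ∉ Submodule.span ℝ {e}) : eval q f = eval e f * ∏ t ∈ lineRoots f e q, -t := by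
  have hnodal := congrArg (Polynomial.eval 0) (eq_C_leadingCoeff_mul_nodal (s := lineRoots f e q)
    (L := restrictLine e q f) (v := id) Function.injective_id.injOn
    (by rw [hf.natDegree_restrictLine_eq, hf.card_lineRoots hq])
    fun t ht => (eval_restrictLine f t).trans (hf.mem_lineRoots.mp ht))
  rw [eval_restrictLine, zero_smul, zero_add, hf.leadingCoeff_restrictLine_eq] at hnodal
  simpa [Lagrange.eval_nodal] using! hnodal

theorem sum_lineRoots_eval_toComplex_div (hf : IsStrictlyHyperbolic f e d)
    (hq : q ∉ Submodule.span ℝ {e}) (hd : 0 < d) {a : MvPolynomial σ ℂ}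
    (ha : a.IsHomogeneous (d - 1)) :
    ∑ t ∈ lineRoots f e q,
        eval (toComplex (t • e + q)) a / (eval (t • e + q) (dirDeriv e f) : ℝ) =
      eval (toComplex e) a / (eval e f : ℝ) := by
  have hdeg := degree_restrictLine_lt (e := toComplex e) (q := toComplex q) ha
    (Nat.sub_lt hd one_pos)
  simp only [← eval_restrictLine_toComplex, hf.sum_lineRoots_eval_div hq hdeg,
    coeff_restrictLine ha]
  rfl

theorem lineRoots_smul (hf : IsStrictlyHyperbolic f e d) {c : ℝ} (hc : c ≠ 0) :
    lineRoots f e (c • q) = (lineRoots f e q).image (c * ·) := by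
  ext t
  have hpt : t • e + c • q = c • ((c⁻¹ * t) • e + q) := by
    rw [smul_add, smul_smul, mul_inv_cancel_left₀ hc]
  have himage : t ∈ (lineRoots f e q).image (c * ·) ↔ c⁻¹ * t ∈ lineRoots f e q := by
    simp only [Finset.mem_image, ← eq_inv_mul_iff_mul_eq₀ hc, exists_eq_right]
  rw [himage, hf.mem_lineRoots, hf.mem_lineRoots, hpt,
    eval_smul_of_isHomogeneous hf.isHomogeneous, mul_eq_zero, or_iff_right (pow_ne_zero d hc)]

theorem lineRoots_add_smul (hf : IsStrictlyHyperbolic f e d) (c : ℝ) :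
    lineRoots f e (q + c • e) = (lineRoots f e q).image (· - c) := by
  ext t
  have hpt : t • e + (q + c • e) = (t + c) • e + q := by module
  simp only [Finset.mem_image, hf.mem_lineRoots, hpt, sub_eq_iff_eq_add, exists_eq_right]

end IsStrictlyHyperbolic

end StrictlyHyperbolic

section LineMoment

open MvPolynomial

variable {σ : Type*} [Fintype σ] {f : MvPolynomial σ ℝ} {e q : σ → ℝ} {d : ℕ}

/-- The `n`-th moment `∑ tⁿ h(te + q) / g(te + q)²` over the zeros `te + q` of `f`, where
`g` is the derivative of `f` in the direction `e`. -/
noncomputable def lineMoment (f : MvPolynomial σ ℝ) (e : σ → ℝ) (h : MvPolynomial σ ℂ) (n : ℕ)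
    (q : σ → ℝ) : ℂ :=
  ∑ t ∈ lineRoots f e q,
    (t : ℂ) ^ n * (eval (toComplex (t • e + q)) h / (eval (t • e + q) (dirDeriv e f) : ℝ) ^ 2)

theorem lineMoment_smul (hf : IsStrictlyHyperbolic f e d) {h : MvPolynomial σ ℂ}
    (hh : h.IsHomogeneous ((d - 1) + (d - 1))) (n : ℕ) {c : ℝ} (hc : c ≠ 0) (q : σ → ℝ) :
    lineMoment f e h n (c • q) = c ^ n * lineMoment f e h n q := by
  rw [lineMoment, hf.lineRoots_smul hc, Finset.sum_image fun _ _ _ _ => mul_left_cancel₀ hc,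
    lineMoment, Finset.mul_sum]
  refine Finset.sum_congr rfl fun t _ => ?_
  have hpt : (c * t) • e + c • q = c • (t • e + q) := by module
  have hc' : (c : ℂ) ≠ 0 := Complex.ofReal_ne_zero.mpr hc
  rw [hpt, eval_toComplex_smul hh,
    eval_smul_of_isHomogeneous (isHomogeneous_dirDeriv e hf.isHomogeneous)]
  push_cast
  rw [mul_pow (_ ^ _) _ 2, ← pow_mul, mul_two, mul_div_mul_left _ _ (pow_ne_zero _ hc')]
  ring

theorem lineMoment_one_add_smul (hf : IsStrictlyHyperbolic f e d) (h : MvPolynomial σ ℂ) (c : ℝ)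
    (q : σ → ℝ) :
    lineMoment f e h 1 (q + c • e) = lineMoment f e h 1 q - c * lineMoment f e h 0 q := by
  rw [lineMoment, hf.lineRoots_add_smul,
    Finset.sum_image fun _ _ _ _ => sub_left_injective.eq_iff.mp, lineMoment, lineMoment,
    Finset.mul_sum, ← Finset.sum_sub_distrib]
  refine Finset.sum_congr rfl fun t _ => ?_
  have hpt : (t - c) • e + (q + c • e) = t • e + q := by module
  rw [hpt]
  push_cast
  ring

-- Division with remainder by the restriction of `f` to the generic line makes the sum, which
-- depends only on the remainder, polynomial in `q`.
theorem exists_eval_eq_sum_lineRoots (hf : IsStrictlyHyperbolic f e d)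
    (b : Polynomial (MvPolynomial σ ℂ)) :
    ∃ T : MvPolynomial σ ℂ, ∀ q ∉ Submodule.span ℝ {e},
      eval (toComplex q) T = ∑ t ∈ lineRoots f e q,
        (b.map (eval (toComplex q))).eval (t : ℂ) / (eval (t • e + q) (dirDeriv e f) : ℝ) := by
  let L : Polynomial (MvPolynomial σ ℂ) :=
    restrictLine (fun i => C (toComplex e i)) X (C (eval e f)⁻¹ * f)
  have hhom : (C (eval e f)⁻¹ * f).IsHomogeneous d := by
    simpa using (isHomogeneous_C σ (eval e f)⁻¹).mul hf.isHomogeneous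
  have hcoeff : L.coeff d = 1 := by
    rw [coeff_restrictLine hhom]
    refine (aeval_algebraMap_apply (MvPolynomial σ ℂ) e _).trans ?_
    rw [aeval_eq_eval, map_mul, eval_C, inv_mul_cancel₀ hf.eval_pos.ne', map_one]
  have hL : L.Monic := Polynomial.monic_of_natDegree_le_of_coeff_eq_one d
    (natDegree_restrictLine_le hhom) hcoeff
  have eval_L {q : σ → ℝ} {t : ℝ} (ht : t ∈ lineRoots f e q) :
      (L.map (eval (toComplex q))).eval (t : ℂ) = 0 := by
    rw [map_eval_restrictLine_C_X, eval_restrictLine, ← toComplex_smul, ← toComplex_add,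
      aeval_toComplex, map_mul, hf.mem_lineRoots.mp ht, mul_zero, Complex.ofReal_zero]
  refine ⟨C (eval e f : ℂ)⁻¹ * (b %ₘ L).coeff (d - 1), fun q hq => ?_⟩
  have hdeg : ((b %ₘ L).map (eval (toComplex q))).degree < d :=
    (Polynomial.degree_map_le.trans_lt (Polynomial.degree_modByMonic_lt _ hL)).trans_le
      (Polynomial.degree_le_of_natDegree_le (natDegree_restrictLine_le hhom))
  rw [map_mul, eval_C, ← Polynomial.coeff_map, mul_comm, ← div_eq_mul_inv,
    ← hf.sum_lineRoots_eval_div hq hdeg]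
  refine Finset.sum_congr rfl fun t ht => ?_
  rw [Polynomial.map_modByMonic _ hL, Polynomial.modByMonic_eq_sub_mul_div, Polynomial.eval_sub,
    Polynomial.eval_mul, eval_L ht, zero_mul, sub_zero]

theorem exists_eval_eq_pow_mul_lineMoment_one (hf : IsStrictlyHyperbolic f e d)
    {h ℓ : MvPolynomial σ ℂ}
    (hℓ : ∀ (q : σ → ℝ) (t : ℝ), eval (toComplex (t • e + q)) ℓ = eval (toComplex q) ℓ) {k : ℕ}
    (hmem : ℓ ^ k * h ∈ Ideal.span
      {map (algebraMap ℝ ℂ) f, map (algebraMap ℝ ℂ) (dirDeriv e f)}) :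
    ∃ T : MvPolynomial σ ℂ, ∀ q ∉ Submodule.span ℝ {e},
      eval (toComplex q) T = eval (toComplex q) ℓ ^ k * lineMoment f e h 1 q := by
  obtain ⟨α, β, hαβ⟩ := Ideal.mem_span_pair.mp hmem
  obtain ⟨T, hT⟩ := exists_eval_eq_sum_lineRoots hf
    (Polynomial.X * restrictLine (fun i => C (toComplex e i)) X β)
  refine ⟨T, fun q hq => ?_⟩
  rw [hT q hq, lineMoment, Finset.mul_sum]
  refine Finset.sum_congr rfl fun t ht => ?_
  have hβt : eval (toComplex q) ℓ ^ k * eval (toComplex (t • e + q)) h =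
      eval (toComplex (t • e + q)) β * (eval (t • e + q) (dirDeriv e f) : ℝ) := by
    rw [← hℓ q t, ← map_pow, ← map_mul, ← hαβ, map_add, map_mul, map_mul, eval_toComplex_map,
      eval_toComplex_map, hf.mem_lineRoots.mp ht, Complex.ofReal_zero, mul_zero, zero_add]
  have hg : ((eval (t • e + q) (dirDeriv e f) : ℝ) : ℂ) ≠ 0 :=
    Complex.ofReal_ne_zero.mpr (hf.eval_dirDeriv_line_ne_zero hq ht)
  rw [Polynomial.map_mul, Polynomial.map_X, map_eval_restrictLine_C_X, Polynomial.eval_mul,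
    Polynomial.eval_X, eval_restrictLine_toComplex, pow_one, mul_left_comm,
    ← mul_div_assoc _ _ (_ ^ 2), hβt]
  field_simp

end LineMoment

section LinearForms

open MvPolynomial

variable {σ K : Type*} [Field K]

theorem irreducible_of_isHomogeneous_one {p : MvPolynomial σ K} (hp : p.IsHomogeneous 1)
    (hp0 : p ≠ 0) : Irreducible p := by
  refine irreducible_of_totalDegree_eq_one (hp.totalDegree hp0) fun c hc => ?_
  refine isUnit_iff_ne_zero.mpr fun hc0 => hp0 (MvPolynomial.ext _ _ fun m => ?_)
  simpa [hc0] using hc m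

/-- The linear form `eᵢ xⱼ - eⱼ xᵢ`, a coordinate of the projection along `e`. -/
noncomputable def crossForm (e : σ → K) (i j : σ) : MvPolynomial σ K :=
  C (e i) * X j - C (e j) * X i

theorem isHomogeneous_crossForm (e : σ → K) (i j : σ) : (crossForm e i j).IsHomogeneous 1 := by
  have hC (c : K) (k : σ) : (C c * X k).IsHomogeneous 1 := by
    simpa using (isHomogeneous_C σ c).mul (isHomogeneous_X K k)
  exact (hC (e i) j).sub (hC (e j) i)

theorem eval_crossForm (e : σ → K) (i j : σ) (x : σ → K) :
    eval x (crossForm e i j) = e i * x j - e j * x i := by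
  simp only [crossForm, map_sub, map_mul, eval_C, eval_X]

theorem eval_crossForm_smul_add (e : σ → K) (i j : σ) (t : K) (x : σ → K) :
    eval (t • e + x) (crossForm e i j) = eval x (crossForm e i j) := by
  simp only [eval_crossForm, Pi.add_apply, Pi.smul_apply, smul_eq_mul]
  ring

theorem crossForm_ne_zero {e : σ → K} {i j : σ} (hi : e i ≠ 0) (hij : i ≠ j) :
    crossForm e i j ≠ 0 := by
  classical
  refine fun h0 => hi ?_
  simpa [eval_crossForm, hij] using congrArg (eval (Pi.single j 1)) h0

theorem isRelPrime_crossForm {e : σ → K} {i j k : σ} (hi : e i ≠ 0) (hij : i ≠ j) (hik : i ≠ k)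
    (hjk : j ≠ k) : IsRelPrime (crossForm e i j) (crossForm e i k) := by
  classical
  have hirr := irreducible_of_isHomogeneous_one (isHomogeneous_crossForm e i j)
    (crossForm_ne_zero hi hij)
  rw [hirr.isRelPrime_iff_not_dvd]
  rintro ⟨r, hr⟩
  have hval := congrArg (eval (Pi.single k 1)) hr
  rw [map_mul, eval_crossForm, eval_crossForm, Pi.single_eq_of_ne hjk, Pi.single_eq_of_ne hik]
    at hval
  exact hi (by simpa using hval)

end LinearForms

section FirstMoment

open MvPolynomial

theorem span_singleton_ne_top_of_one_lt_finrank {K M : Type*} [Field K] [AddCommGroup M]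
    [Module K M] (hM : 1 < Module.finrank K M) (v : M) : Submodule.span K {v} ≠ ⊤ := fun hv =>
  hM.not_ge (finrank_le_one v fun _ => Submodule.mem_span_singleton.mp (hv ▸ Submodule.mem_top))

theorem span_singleton_ne_top_fin_three (e : Fin 3 → ℝ) : Submodule.span ℝ {e} ≠ ⊤ :=
  span_singleton_ne_top_of_one_lt_finrank (by simp) e

theorem exists_eval_eq_of_isRelPrime {σ : Type*} [Finite σ] {V : Submodule ℝ (σ → ℝ)} (hV : V ≠ ⊤)
    {p₁ p₂ T₁ T₂ : MvPolynomial σ ℂ} (hp₁ : p₁ ≠ 0) (hp : IsRelPrime p₁ p₂) {k l : ℕ}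
    {φ : (σ → ℝ) → ℂ}
    (h₁ : ∀ q ∉ V, eval (toComplex q) T₁ = eval (toComplex q) p₁ ^ k * φ q)
    (h₂ : ∀ q ∉ V, eval (toComplex q) T₂ = eval (toComplex q) p₂ ^ l * φ q) :
    ∃ Q : MvPolynomial σ ℂ, ∀ q ∉ V,
      eval (toComplex q) p₁ ≠ 0 ∨ eval (toComplex q) p₂ ≠ 0 → eval (toComplex q) Q = φ q := by
  have hcross : T₁ * p₂ ^ l = p₁ ^ k * T₂ := by
    refine eq_of_eval_toComplex_eq_of_notMem hV fun q hq => ?_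
    rw [map_mul, map_mul, map_pow, map_pow, h₁ q hq, h₂ q hq]
    ring
  obtain ⟨Q, rfl⟩ : p₁ ^ k ∣ T₁ := hp.pow.dvd_of_dvd_mul_right ⟨T₂, hcross⟩
  refine ⟨Q, fun q hq => ?_⟩
  have hQ₁ := h₁ q hq
  rintro (hq₁ | hq₂)
  · rw [map_mul, map_pow] at hQ₁
    exact mul_left_cancel₀ (pow_ne_zero k hq₁) hQ₁
  · obtain rfl : T₂ = p₂ ^ l * Q :=
      mul_left_cancel₀ (pow_ne_zero k hp₁) (by rw [← hcross, mul_left_comm, mul_comm])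
    have hQ₂ := h₂ q hq
    rw [map_mul, map_pow] at hQ₂
    exact mul_left_cancel₀ (pow_ne_zero l hq₂) hQ₂

theorem exists_linear_of_eval_two_smul {σ : Type*} [Fintype σ] {V : Submodule ℝ (σ → ℝ)}
    (hV : V ≠ ⊤) {Q : MvPolynomial σ ℂ}
    (hQ : ∀ q ∉ V, eval (toComplex ((2 : ℝ) • q)) Q = 2 * eval (toComplex q) Q) :
    ∃ m : σ → ℂ, ∀ x, eval x Q = ∑ i, m i * x i := by
  have hscale : aeval ((C 2 : MvPolynomial σ ℂ) • X) Q = C (2 ^ 1) * Q := by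
    refine eq_of_eval_toComplex_eq_of_notMem hV fun q hq => ?_
    have hcomp : eval (toComplex q) (aeval ((C 2 : MvPolynomial σ ℂ) • X) Q) =
        eval (toComplex ((2 : ℝ) • q)) Q := by
      refine (eval₂Hom_bind₁ (RingHom.id ℂ) (toComplex q) _ Q).trans ?_
      congr 2
      ext i
      simp [toComplex]
    rw [hcomp, hQ q hq, map_mul, eval_C, pow_one]
  have two_pow_inj (m : ℕ) (hm : (2 : ℂ) ^ m = 2 ^ 1) : m = 1 :=
    Nat.pow_right_injective le_rfl (by exact_mod_cast hm)
  have hlin : Q ∈ homogeneousSubmodule σ ℂ 1 :=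
    isHomogeneous_of_aeval_C_smul_X_eq two_pow_inj hscale
  rw [homogeneousSubmodule_one_eq_span_X] at hlin
  obtain ⟨m, rfl⟩ := (Submodule.mem_span_range_iff_exists_fun ℂ).mp hlin
  exact ⟨m, fun x => by simp [smul_eval]⟩

theorem exists_pow_mul_mem_span_pair {f g h ℓ : MvPolynomial (Fin 3) ℂ} {m n k : ℕ}
    (hf : f.IsHomogeneous m) (hg : g.IsHomogeneous n) (hh : h.IsHomogeneous k)
    (hℓ : ℓ.IsHomogeneous 1)
    (hgrad : ∀ x, x ≠ 0 → eval x f = 0 → eval x g = 0 →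
      LinearIndependent ℂ ![fun i => eval x (pderiv i f), fun i => eval x (pderiv i g)])
    (hzero : ∀ x, x ≠ 0 → eval x f = 0 → eval x g = 0 → eval x h = 0) :
    ∃ k, ℓ ^ k * h ∈ Ideal.span {f, g} := by
  have hne {x : Fin 3 → ℂ} (hx : eval x ℓ ≠ 0) : x ≠ 0 := by
    rintro rfl
    exact hx (by simpa only [zero_smul, pow_one, zero_mul] using eval_smul_of_isHomogeneous hℓ 0 0)
  have hrange : Set.range ![f, g] = {f, g} := by simp [Matrix.range_cons, Set.pair_comm]
  have hjac (x : Fin 3 → ℂ) : (fun i j => eval x (pderiv j (![f, g] i))) =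
      ![fun i => eval x (pderiv i f), fun i => eval x (pderiv i g)] := by
    ext i j
    fin_cases i <;> rfl
  rw [← hrange]
  refine exists_pow_mul_mem_span_of_isHomogeneous (deg := ![m, n])
    (Fin.forall_fin_two.mpr ⟨hf, hg⟩) hℓ hh (fun x hx hF => ?_)
    (fun x hx hF => hzero x (hne hx) (hF 0) (hF 1))
  rw [hjac]
  exact hgrad x (hne hx) (hF 0) (hF 1)

variable {f : MvPolynomial (Fin 3) ℝ} {e : Fin 3 → ℝ} {d : ℕ} {h : MvPolynomial (Fin 3) ℂ}

-- The first moment is a rational function whose denominator can be taken to be a power of either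
-- of two coprime linear forms, hence a polynomial.
theorem exists_eval_eq_lineMoment_one (hf : IsStrictlyHyperbolic f e d) (he : e ≠ 0)
    (hmem : ∀ ℓ : MvPolynomial (Fin 3) ℂ, ℓ.IsHomogeneous 1 → ∃ k, ℓ ^ k * h ∈ Ideal.span
      {map (algebraMap ℝ ℂ) f, map (algebraMap ℝ ℂ) (dirDeriv e f)}) :
    ∃ Q : MvPolynomial (Fin 3) ℂ, ∀ q ∉ Submodule.span ℝ {e},
      eval (toComplex q) Q = lineMoment f e h 1 q := by
  obtain ⟨i, hi⟩ := Function.ne_iff.mp he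
  have hi' : toComplex e i ≠ 0 := Complex.ofReal_ne_zero.mpr hi
  obtain ⟨hi₁, hi₂, h₁₂⟩ : i ≠ i + 1 ∧ i ≠ i + 2 ∧ i + 1 ≠ i + 2 := by clear * -; decide +revert
  have exists_numerator (j : Fin 3) : ∃ (k : ℕ) (T : MvPolynomial (Fin 3) ℂ),
      ∀ q ∉ Submodule.span ℝ {e}, eval (toComplex q) T =
        eval (toComplex q) (crossForm (toComplex e) i j) ^ k * lineMoment f e h 1 q := by
    obtain ⟨k, hk⟩ := hmem _ (isHomogeneous_crossForm (toComplex e) i j)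
    refine ⟨k, exists_eval_eq_pow_mul_lineMoment_one hf (fun q t => ?_) hk⟩
    rw [toComplex_add, toComplex_smul, eval_crossForm_smul_add]
  obtain ⟨k₁, T₁, hT₁⟩ := exists_numerator (i + 1)
  obtain ⟨k₂, T₂, hT₂⟩ := exists_numerator (i + 2)
  obtain ⟨Q, hQ⟩ := exists_eval_eq_of_isRelPrime (span_singleton_ne_top_fin_three e)
    (crossForm_ne_zero hi' hi₁) (isRelPrime_crossForm hi' hi₁ hi₂ h₁₂) hT₁ hT₂
  refine ⟨Q, fun q hq => hQ q hq ?_⟩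
  by_contra! hcross
  refine hq (Submodule.mem_span_singleton.mpr ⟨q i / e i, funext fun j => ?_⟩)
  have hcross_real {j : Fin 3} (hj : eval (toComplex q) (crossForm (toComplex e) i j) = 0) :
      e i * q j = e j * q i := by
    rw [eval_crossForm, sub_eq_zero] at hj
    exact Complex.ofReal_injective (by simpa only [toComplex, Complex.ofReal_mul] using hj)
  have hj : e i * q j = e j * q i := by
    obtain rfl | rfl | rfl : j = i ∨ j = i + 1 ∨ j = i + 2 := by clear * -; decide +revert
    · rfl
    · exact hcross_real hcross.1
    · exact hcross_real hcross.2
  rw [Pi.smul_apply, smul_eq_mul, div_mul_eq_mul_div, div_eq_iff hi, mul_comm, ← hj, mul_comm]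

theorem exists_lineMoment_eq_linear (hf : IsStrictlyHyperbolic f e d) (he : e ≠ 0)
    (hh : h.IsHomogeneous ((d - 1) + (d - 1)))
    (hmem : ∀ ℓ : MvPolynomial (Fin 3) ℂ, ℓ.IsHomogeneous 1 → ∃ k, ℓ ^ k * h ∈ Ideal.span
      {map (algebraMap ℝ ℂ) f, map (algebraMap ℝ ℂ) (dirDeriv e f)}) :
    ∃ m : Fin 3 → ℂ, ∀ q ∉ Submodule.span ℝ {e},
      lineMoment f e h 1 q = ∑ i, m i * q i ∧ lineMoment f e h 0 q = -∑ i, m i * e i := by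
  obtain ⟨Q, hQ⟩ := exists_eval_eq_lineMoment_one hf he hmem
  have two_smul_notMem {q : Fin 3 → ℝ} (hq : q ∉ Submodule.span ℝ {e}) :
      (2 : ℝ) • q ∉ Submodule.span ℝ {e} := by rwa [Submodule.smul_mem_iff _ two_ne_zero]
  obtain ⟨m, hm⟩ := exists_linear_of_eval_two_smul
    (span_singleton_ne_top_fin_three e) (Q := Q) fun q hq => by
      rw [hQ q hq, hQ _ (two_smul_notMem hq), lineMoment_smul hf hh 1 two_ne_zero, pow_one,
        Complex.ofReal_ofNat]
  have hlin {q : Fin 3 → ℝ} (hq : q ∉ Submodule.span ℝ {e}) :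
      lineMoment f e h 1 q = ∑ i, m i * q i := by rw [← hQ q hq, hm]; rfl
  refine ⟨m, fun q hq => ⟨hlin hq, ?_⟩⟩
  have hqe : q + (1 : ℝ) • e ∉ Submodule.span ℝ {e} := by
    rwa [Submodule.add_mem_iff_left _
      (Submodule.smul_mem _ _ (Submodule.mem_span_singleton_self e))]
  have hshift := lineMoment_one_add_smul hf h 1 q
  rw [hlin hqe, hlin hq] at hshift
  simp only [Pi.add_apply, one_smul, Complex.ofReal_add, mul_add,
    Finset.sum_add_distrib, Complex.ofReal_one, one_mul] at hshift
  linear_combination hshift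

end FirstMoment

section ValueMatrix

open MvPolynomial Matrix

theorem eval_star_map_starRingEnd {σ : Type*} (x : σ → ℂ) (p : MvPolynomial σ ℂ) :
    eval (star x) (map (starRingEnd ℂ) p) = star (eval x p) :=
  (map_eval (starRingEnd ℂ) x p).symm

theorem eval_toComplex_map_starRingEnd {σ : Type*} (x : σ → ℝ) (p : MvPolynomial σ ℂ) :
    eval (toComplex x) (map (starRingEnd ℂ) p) = star (eval (toComplex x) p) := by
  have hstar : star (toComplex x) = toComplex x := funext fun i => Complex.conj_ofReal (x i)
  rw [← eval_star_map_starRingEnd, hstar]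

variable {σ ι : Type*}

/-- The diagonal matrix of the parameters of the zeros of `f` on the line through `q` with
direction `e`. -/
noncomputable def rootMatrix (f : MvPolynomial σ ℝ) (e q : σ → ℝ) :
    Matrix (lineRoots f e q) (lineRoots f e q) ℂ :=
  diagonal fun t => ((t : ℝ) : ℂ)

theorem isHermitian_rootMatrix (f : MvPolynomial σ ℝ) (e q : σ → ℝ) :
    (rootMatrix f e q).IsHermitian :=
  isHermitian_diagonal_of_self_adjoint _ (funext fun t => Complex.conj_ofReal t)

variable [Fintype σ] {f : MvPolynomial σ ℝ} {e q : σ → ℝ} {d : ℕ} {a : ι → MvPolynomial σ ℂ}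

/-- The values of the functions `aⱼ / g` at the zeros of `f` on the line through `q` with
direction `e`, where `g` is the derivative of `f` in the direction `e`. -/
noncomputable def valueMatrix (f : MvPolynomial σ ℝ) (e : σ → ℝ) (a : ι → MvPolynomial σ ℂ)
    (q : σ → ℝ) : Matrix (lineRoots f e q) ι ℂ :=
  of fun t j => eval (toComplex ((t : ℝ) • e + q)) (a j) /
    (eval ((t : ℝ) • e + q) (dirDeriv e f) : ℝ)

theorem conjTranspose_valueMatrix_mul_pow_mul_apply (f : MvPolynomial σ ℝ) (e q : σ → ℝ)
    (a : ι → MvPolynomial σ ℂ) (n : ℕ) (i j : ι) :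
    ((valueMatrix f e a q)ᴴ * rootMatrix f e q ^ n * valueMatrix f e a q) i j =
      lineMoment f e (map (starRingEnd ℂ) (a i) * a j) n q := by
  rw [rootMatrix, diagonal_pow, mul_apply, lineMoment,
    ← Finset.sum_coe_sort (lineRoots f e q)]
  refine Finset.sum_congr rfl fun t _ => ?_
  rw [mul_diagonal, conjTranspose_apply, valueMatrix, of_apply, of_apply, star_div₀,
    Complex.star_def, Complex.conj_ofReal, map_mul, eval_toComplex_map_starRingEnd, Pi.pow_apply]
  simp only [starRingEnd_apply]
  ring

theorem one_vecMul_valueMatrix (hf : IsStrictlyHyperbolic f e d) (hq : q ∉ Submodule.span ℝ {e})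
    (hd : 0 < d) (ha : ∀ j, (a j).IsHomogeneous (d - 1)) :
    (1 ᵥ* valueMatrix f e a q) = ((eval e f : ℝ) : ℂ)⁻¹ • fun j => eval (toComplex e) (a j) := by
  ext j
  rw [Pi.smul_apply, smul_eq_mul, mul_comm, ← div_eq_mul_inv,
    ← hf.sum_lineRoots_eval_toComplex_div hq hd (ha j),
    ← Finset.sum_coe_sort (lineRoots f e q)]
  simp [vecMul, dotProduct, valueMatrix]

theorem exists_eval_eq_vecMul_valueMatrix (hf : IsStrictlyHyperbolic f e d)
    (hq : q ∉ Submodule.span ℝ {e}) (hd : 0 < d) (ha : ∀ j, (a j).IsHomogeneous (d - 1)) :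
    ∃ c, (fun j => eval (toComplex q) (a j)) = c ᵥ* valueMatrix f e a q ∧
      c ᵥ* -rootMatrix f e q = fun _ => ((eval q f : ℝ) : ℂ) := by
  obtain ⟨c, hc, hsum⟩ := hf.exists_weights_lineRoots hq
  refine ⟨fun t => c t, funext fun j => ?_, funext fun t => ?_⟩
  · have hdeg := degree_restrictLine_lt (e := toComplex e) (q := toComplex q) (ha j)
      (Nat.sub_lt hd one_pos)
    have heval := hsum _ hdeg
    simp only [eval_restrictLine_toComplex] at heval
    rw [← Complex.ofReal_zero, eval_restrictLine_toComplex, zero_smul, zero_add] at heval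
    rw [heval, ← Finset.sum_coe_sort (lineRoots f e q)]
    rfl
  · rw [rootMatrix, diagonal_neg, vecMul_diagonal]
    exact hc t t.2

theorem valueMatrix_mulVec_single [DecidableEq ι] [Fintype ι] (hf : IsStrictlyHyperbolic f e d)
    (hq : q ∉ Submodule.span ℝ {e}) {i : ι} (hi : a i = map (algebraMap ℝ ℂ) (dirDeriv e f)) :
    valueMatrix f e a q *ᵥ Pi.single i 1 = 1 := by
  ext t
  rw [mulVec_single_one, col_apply, valueMatrix, of_apply, hi, eval_toComplex_map, Pi.one_apply,
    div_self (Complex.ofReal_ne_zero.mpr (hf.eval_dirDeriv_line_ne_zero hq t.2))]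

end ValueMatrix

section MomentPencil

open MvPolynomial Matrix

theorem linearMap_eq_of_forall_notMem {R M N : Type*} [Ring R] [AddCommGroup M] [Module R M]
    [AddCommGroup N] [Module R N] {V : Submodule R M} (hV : V ≠ ⊤) {φ ψ : M →ₗ[R] N}
    (h : ∀ x ∉ V, φ x = ψ x) : φ = ψ := by
  obtain ⟨y, hy⟩ := SetLike.exists_not_mem_of_ne_top V hV
  ext x
  by_cases hx : x ∈ V
  · have hxy : x + y ∉ V := by rwa [V.add_mem_iff_right hx]
    simpa [h y hy] using h _ hxy
  · exact h x hx

/-- The pencil `A(e)⁻¹ A(x) A(e)⁻¹`. For the moment pencil `A` of `f` it is the determinantal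
representation of `f`. -/
noncomputable def normalizedPencil {E ι : Type*} [AddCommGroup E] [Module ℝ E] [Fintype ι]
    [DecidableEq ι] (A : E →ₗ[ℝ] Matrix ι ι ℂ) (e : E) : E →ₗ[ℝ] Matrix ι ι ℂ :=
  LinearMap.mulRight ℝ (A e)⁻¹ ∘ₗ LinearMap.mulLeft ℝ (A e)⁻¹ ∘ₗ A

theorem normalizedPencil_apply {E ι : Type*} [AddCommGroup E] [Module ℝ E] [Fintype ι]
    [DecidableEq ι] (A : E →ₗ[ℝ] Matrix ι ι ℂ) (e x : E) :
    normalizedPencil A e x = (A e)⁻¹ * A x * (A e)⁻¹ := rfl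

theorem posDef_normalizedPencil {E ι : Type*} [AddCommGroup E] [Module ℝ E] [Fintype ι]
    [DecidableEq ι] {A : E →ₗ[ℝ] Matrix ι ι ℂ} {e : E} (hpos : (A e).PosDef) :
    (normalizedPencil A e e).PosDef := by
  rw [normalizedPencil_apply, nonsing_inv_mul _ hpos.det_pos.ne'.isUnit, Matrix.one_mul]
  exact hpos.inv

theorem eq_zero_of_isHermitian_diagonal_mul {n : Type*} [Fintype n] [DecidableEq n] {τ : n → ℝ}
    (hτ : Function.Injective τ) {E : Matrix n n ℂ} (hE : E.IsHermitian)
    (hDE : (diagonal (fun t => (τ t : ℂ)) * E).IsHermitian) (hone : 1 ᵥ* E = 0) : E = 0 := by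
  have offDiag {s t : n} (hst : s ≠ t) : E s t = 0 := by
    have hcomm := hDE.apply s t
    rw [diagonal_mul, diagonal_mul, star_mul', hE.apply s t, Complex.star_def,
      Complex.conj_ofReal, ← sub_eq_zero, ← sub_mul, mul_eq_zero, sub_eq_zero] at hcomm
    exact hcomm.resolve_left fun h => hst (hτ (Complex.ofReal_injective h)).symm
  ext s t
  rcases eq_or_ne s t with rfl | hst
  · have hsum : ∑ t, E t s = 0 := by simpa [vecMul, dotProduct] using congrFun hone s
    rwa [Finset.sum_eq_single s (fun t _ hts => offDiag hts) (by simp)] at hsum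
  · exact offDiag hst

variable {σ ι : Type*} [Fintype σ] {f : MvPolynomial σ ℝ} {e q : σ → ℝ} {d : ℕ}
  {a : ι → MvPolynomial σ ℂ} {A : (σ → ℝ) →ₗ[ℝ] Matrix ι ι ℂ}

/-- The linear pencil `A` collects the zeroth and first moments of the products `āᵢ aⱼ`: writing
`W` for the matrix of values of `aⱼ / g` at the zeros of `f` on the line through `q` with direction
`e`, and `D` for the diagonal matrix of their parameters, `WᴴW = A(e)` and `WᴴDW = -A(q)`. -/
def IsMomentPencil (f : MvPolynomial σ ℝ) (e : σ → ℝ) (a : ι → MvPolynomial σ ℂ)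
    (A : (σ → ℝ) →ₗ[ℝ] Matrix ι ι ℂ) : Prop :=
  ∀ q ∉ Submodule.span ℝ {e}, (valueMatrix f e a q)ᴴ * valueMatrix f e a q = A e ∧
    (valueMatrix f e a q)ᴴ * rootMatrix f e q * valueMatrix f e a q = -A q

theorem exists_isMomentPencil {f : MvPolynomial (Fin 3) ℝ} {e : Fin 3 → ℝ}
    {a : ι → MvPolynomial (Fin 3) ℂ} (hf : IsStrictlyHyperbolic f e d) (he : e ≠ 0)
    (ha : ∀ j, (a j).IsHomogeneous (d - 1))
    (hmem : ∀ i j (ℓ : MvPolynomial (Fin 3) ℂ), ℓ.IsHomogeneous 1 →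
      ∃ k, ℓ ^ k * (map (starRingEnd ℂ) (a i) * a j) ∈ Ideal.span
        {map (algebraMap ℝ ℂ) f, map (algebraMap ℝ ℂ) (dirDeriv e f)}) :
    ∃ A, IsMomentPencil f e a A := by
  choose m hm using fun i j =>
    exists_lineMoment_eq_linear hf he (((ha i).map _).mul (ha j)) (hmem i j)
  have pencil_apply (x : Fin 3 → ℝ) (i j : ι) :
      Fintype.linearCombination ℝ (fun k => of fun i j => -m i j k) x i j =
        -∑ k, m i j k * x k := by
    simp [Fintype.linearCombination_apply, Matrix.sum_apply, mul_comm]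
  refine ⟨Fintype.linearCombination ℝ fun k => of fun i j => -m i j k, fun q hq => ⟨?_, ?_⟩⟩
  · ext i j
    rw [pencil_apply, ← (hm i j q hq).2, ← conjTranspose_valueMatrix_mul_pow_mul_apply, pow_zero,
      Matrix.mul_one]
  · ext i j
    rw [Matrix.neg_apply, pencil_apply, neg_neg, ← (hm i j q hq).1,
      ← conjTranspose_valueMatrix_mul_pow_mul_apply, pow_one]

namespace IsMomentPencil

theorem isHermitian (hA : IsMomentPencil f e a A) (he : Submodule.span ℝ {e} ≠ ⊤) (x : σ → ℝ) :
    (A x).IsHermitian := by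
  have hstar : (conjTransposeLinearEquiv ι ι ℝ ℂ).toLinearMap ∘ₗ A = A := by
    refine linearMap_eq_of_forall_notMem he fun q hq => ?_
    have hherm := isHermitian_conjTranspose_mul_mul (valueMatrix f e a q)
      (isHermitian_rootMatrix f e q)
    rw [(hA q hq).2] at hherm
    exact neg_injective ((conjTranspose_neg (A q)).symm.trans hherm)
  exact LinearMap.congr_fun hstar x

theorem posDef [Finite ι] (hA : IsMomentPencil f e a A) (hf : IsStrictlyHyperbolic f e d)
    (he : Submodule.span ℝ {e} ≠ ⊤) (hd : 0 < d) (ha : ∀ j, (a j).IsHomogeneous (d - 1))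
    (hindep : LinearIndependent ℂ a) : (A e).PosDef := by
  cases nonempty_fintype ι
  obtain ⟨q₀, hq₀⟩ := SetLike.exists_not_mem_of_ne_top _ he
  have hvalue {v : ι → ℂ} (hv : valueMatrix f e a q₀ *ᵥ v = 0) (q : σ → ℝ)
      (hq : q ∉ Submodule.span ℝ {e}) : valueMatrix f e a q *ᵥ v = 0 := by
    rwa [← conjTranspose_mul_self_mulVec_eq_zero, (hA q hq).1, ← (hA q₀ hq₀).1,
      conjTranspose_mul_self_mulVec_eq_zero]
  rw [← (hA q₀ hq₀).1]
  refine PosDef.conjTranspose_mul_self _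
    ((injective_iff_map_eq_zero (valueMatrix f e a q₀).mulVecLin).mpr fun v hv => ?_)
  refine funext (Fintype.linearIndependent_iff.mp hindep v
    (eq_of_eval_toComplex_eq_of_notMem he fun q hq => ?_))
  obtain ⟨c, hc, -⟩ := exists_eval_eq_vecMul_valueMatrix hf hq hd ha
  have hdot : (fun j => eval (toComplex q) (a j)) ⬝ᵥ v = 0 := by
    rw [hc, ← dotProduct_mulVec, hvalue hv q hq, dotProduct_zero]
  simpa [dotProduct, smul_eval, mul_comm] using hdot

variable [Fintype ι] [DecidableEq ι]

theorem inv_mul_conjTranspose_mul_valueMatrix (hA : IsMomentPencil f e a A) (hpos : (A e).PosDef)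
    (hq : q ∉ Submodule.span ℝ {e}) :
    (A e)⁻¹ * (valueMatrix f e a q)ᴴ * valueMatrix f e a q = 1 := by
  rw [Matrix.mul_assoc, (hA q hq).1, nonsing_inv_mul _ hpos.det_pos.ne'.isUnit]

theorem valueMatrix_mul_inv_mul_conjTranspose (hA : IsMomentPencil f e a A)
    (hf : IsStrictlyHyperbolic f e d) (hcard : Fintype.card ι = d) (hpos : (A e).PosDef)
    (hq : q ∉ Submodule.span ℝ {e}) :
    valueMatrix f e a q * ((A e)⁻¹ * (valueMatrix f e a q)ᴴ) = 1 := by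
  refine (mul_eq_one_comm_of_card_eq _ _ _ ?_).mp (hA.inv_mul_conjTranspose_mul_valueMatrix hpos hq)
  rw [hcard, Fintype.card_coe, hf.card_lineRoots hq]

theorem isHermitian_normalizedPencil (hA : IsMomentPencil f e a A)
    (he : Submodule.span ℝ {e} ≠ ⊤) (x : σ → ℝ) : (normalizedPencil A e x).IsHermitian := by
  have h := isHermitian_conjTranspose_mul_mul (A e)⁻¹ (hA.isHermitian he x)
  rwa [(hA.isHermitian he e).inv.eq] at h

theorem eval_eq_mul_det_normalizedPencil (hA : IsMomentPencil f e a A)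
    (hf : IsStrictlyHyperbolic f e d) (hcard : Fintype.card ι = d) (hpos : (A e).PosDef)
    (hq : q ∉ Submodule.span ℝ {e}) :
    ((eval q f : ℝ) : ℂ) = (eval e f : ℝ) * (A e).det * (normalizedPencil A e q).det := by
  have hconj : normalizedPencil A e q * A e =
      (A e)⁻¹ * (valueMatrix f e a q)ᴴ * -rootMatrix f e q * valueMatrix f e a q := by
    rw [normalizedPencil_apply, nonsing_inv_mul_cancel_right _ _ hpos.det_pos.ne'.isUnit,
      ← neg_eq_iff_eq_neg.mpr (hA q hq).2]
    simp only [Matrix.mul_neg, Matrix.neg_mul, Matrix.mul_assoc]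
  have hdet : (normalizedPencil A e q).det * (A e).det = ∏ t ∈ lineRoots f e q, -(t : ℂ) := by
    rw [← det_mul, hconj, det_conj_of_mul_eq_one (hA.inv_mul_conjTranspose_mul_valueMatrix hpos hq)
      (hA.valueMatrix_mul_inv_mul_conjTranspose hf hcard hpos hq), rootMatrix, diagonal_neg,
      det_diagonal, Finset.prod_coe_sort (lineRoots f e q) fun t => -(t : ℂ)]
  rw [mul_assoc, mul_comm (A e).det, hdet, hf.eval_eq_mul_prod_lineRoots hq]
  push_cast
  rfl

theorem eval_vecMul_normalizedPencil (hA : IsMomentPencil f e a A)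
    (hf : IsStrictlyHyperbolic f e d) (hd : 0 < d) (ha : ∀ j, (a j).IsHomogeneous (d - 1))
    (hcard : Fintype.card ι = d) (hpos : (A e).PosDef) {i₀ : ι}
    (hi₀ : a i₀ = map (algebraMap ℝ ℂ) (dirDeriv e f)) (hq : q ∉ Submodule.span ℝ {e}) :
    (fun i => eval (toComplex q) (a i)) ᵥ* normalizedPencil A e q =
      Pi.single i₀ ((eval q f : ℝ) : ℂ) := by
  have hone : 1 ᵥ* (valueMatrix f e a q * (A e)⁻¹) = Pi.single i₀ 1 := by
    have hV : ((A e)⁻¹ * (valueMatrix f e a q)ᴴ) *ᵥ 1 = Pi.single i₀ 1 := by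
      rw [← valueMatrix_mulVec_single hf hq hi₀, mulVec_mulVec,
        hA.inv_mul_conjTranspose_mul_valueMatrix hpos hq, one_mulVec]
    have hstar := congrArg star hV
    rwa [star_mulVec, conjTranspose_mul, conjTranspose_conjTranspose,
      hpos.isHermitian.inv.eq, star_one, ← Pi.single_star, star_one] at hstar
  have hpencil : normalizedPencil A e q = ((A e)⁻¹ * (valueMatrix f e a q)ᴴ) *
      (-rootMatrix f e q * (valueMatrix f e a q * (A e)⁻¹)) := by
    rw [normalizedPencil_apply, ← neg_eq_iff_eq_neg.mpr (hA q hq).2]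
    simp only [Matrix.mul_neg, Matrix.neg_mul, Matrix.mul_assoc]
  obtain ⟨c, hc, hroot⟩ := exists_eval_eq_vecMul_valueMatrix hf hq hd ha
  calc (fun i => eval (toComplex q) (a i)) ᵥ* normalizedPencil A e q
      = (c ᵥ* -rootMatrix f e q) ᵥ* (valueMatrix f e a q * (A e)⁻¹) := by
        rw [hpencil, hc, vecMul_vecMul, ← Matrix.mul_assoc,
          hA.valueMatrix_mul_inv_mul_conjTranspose hf hcard hpos hq, Matrix.one_mul, vecMul_vecMul]
    _ = ((eval q f : ℝ) : ℂ) • (1 ᵥ* (valueMatrix f e a q * (A e)⁻¹)) := by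
        rw [hroot, ← smul_vecMul]
        congr 1
        ext t
        simp
    _ = Pi.single i₀ ((eval q f : ℝ) : ℂ) := by
        rw [hone, ← Pi.single_smul, smul_eq_mul, mul_one]

end IsMomentPencil

theorem rootMatrix_mul_valueMatrix_mul [Fintype ι] {Δ : (σ → ℝ) →ₗ[ℝ] Matrix ι ι ℂ}
    (hzero : ∀ x, (fun i => eval (toComplex x) (a i)) ᵥ* Δ x = 0) :
    rootMatrix f e q * (valueMatrix f e a q * Δ e) = -(valueMatrix f e a q * Δ q) := by
  rw [← add_eq_zero_iff_eq_neg]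
  ext t j
  have hrow : valueMatrix f e a q t =
      ((eval ((t : ℝ) • e + q) (dirDeriv e f) : ℝ) : ℂ)⁻¹ •
        fun i => eval (toComplex ((t : ℝ) • e + q)) (a i) :=
    funext fun i => div_eq_inv_mul _ _
  have hsplit : (valueMatrix f e a q t ᵥ* Δ ((t : ℝ) • e + q)) j =
      (t : ℝ) • (valueMatrix f e a q t ᵥ* Δ e) j + (valueMatrix f e a q t ᵥ* Δ q) j := by
    rw [map_add, map_smul, vecMul_add, vecMul_smul]
    rfl
  rw [hrow, smul_vecMul, hzero, smul_zero, ← hrow] at hsplit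
  rw [Matrix.add_apply, rootMatrix, diagonal_mul]
  exact hsplit.symm

theorem IsMomentPencil.eq_zero_of_valueMatrix_mul_eq_zero [Fintype ι] {κ : Type*}
    (hA : IsMomentPencil f e a A) (hpos : (A e).PosDef) (hq : q ∉ Submodule.span ℝ {e})
    {X : Matrix ι κ ℂ} (hX : valueMatrix f e a q * X = 0) : X = 0 := by
  classical
  rw [← Matrix.one_mul X, ← hA.inv_mul_conjTranspose_mul_valueMatrix hpos hq, Matrix.mul_assoc,
    hX, Matrix.mul_zero]

theorem IsMomentPencil.eq_zero_of_eval_vecMul_eq_zero [Fintype ι] (hA : IsMomentPencil f e a A)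
    (hf : IsStrictlyHyperbolic f e d) (he : Submodule.span ℝ {e} ≠ ⊤) (hd : 0 < d)
    (ha : ∀ j, (a j).IsHomogeneous (d - 1)) (hpos : (A e).PosDef)
    {Δ : (σ → ℝ) →ₗ[ℝ] Matrix ι ι ℂ} (hΔ : ∀ x, (Δ x).IsHermitian)
    (hzero : ∀ x, (fun i => eval (toComplex x) (a i)) ᵥ* Δ x = 0) : Δ = 0 := by
  refine linearMap_eq_of_forall_notMem he fun q hq => ?_
  set W := valueMatrix f e a q
  have hrows : rootMatrix f e q * (W * Δ e) = -(W * Δ q) :=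
    rootMatrix_mul_valueMatrix_mul hzero
  have hE : W * Δ e * Wᴴ = 0 := by
    refine eq_zero_of_isHermitian_diagonal_mul (τ := fun t : lineRoots f e q => (t : ℝ))
      Subtype.val_injective (isHermitian_mul_mul_conjTranspose W (hΔ e)) ?_ ?_
    · change (rootMatrix f e q * (W * Δ e * Wᴴ)).IsHermitian
      rw [← Matrix.mul_assoc, hrows, Matrix.neg_mul]
      exact (isHermitian_mul_mul_conjTranspose W (hΔ q)).neg
    · rw [← vecMul_vecMul, ← vecMul_vecMul, one_vecMul_valueMatrix hf hq hd ha, smul_vecMul,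
        hzero, smul_zero, zero_vecMul]
  have hΔe : Δ e = 0 := by
    have hstar : Δ e * Wᴴ = 0 :=
      hA.eq_zero_of_valueMatrix_mul_eq_zero hpos hq ((Matrix.mul_assoc _ _ _).symm.trans hE)
    rw [← conjTranspose_eq_zero, conjTranspose_mul, conjTranspose_conjTranspose,
      (hΔ e).eq] at hstar
    exact hA.eq_zero_of_valueMatrix_mul_eq_zero hpos hq hstar
  rw [hΔe, Matrix.mul_zero, Matrix.mul_zero, zero_eq_neg] at hrows
  exact hA.eq_zero_of_valueMatrix_mul_eq_zero hpos hq hrows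

end MomentPencil

section Pencils

open MvPolynomial Matrix

variable {d : ℕ} {M₁ M₂ M₃ N₁ N₂ N₃ : Matrix (Fin d) (Fin d) ℂ}

/-- The values of a pencil at real points, as a real linear map. -/
noncomputable def pencilMap (M₁ M₂ M₃ : Matrix (Fin d) (Fin d) ℂ) :
    (Fin 3 → ℝ) →ₗ[ℝ] Matrix (Fin d) (Fin d) ℂ :=
  Fintype.linearCombination ℝ ![M₁, M₂, M₃]

theorem pencilMap_apply (M₁ M₂ M₃ : Matrix (Fin d) (Fin d) ℂ) (x : Fin 3 → ℝ) :
    pencilMap M₁ M₂ M₃ x = x 0 • M₁ + x 1 • M₂ + x 2 • M₃ := by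
  rw [pencilMap, Fintype.linearCombination_apply, Fin.sum_univ_three]
  rfl

theorem pencilMap_single (N : (Fin 3 → ℝ) →ₗ[ℝ] Matrix (Fin d) (Fin d) ℂ) :
    pencilMap (N (Pi.single 0 1)) (N (Pi.single 1 1)) (N (Pi.single 2 1)) = N := by
  ext1 k
  fin_cases k <;> ext1 <;> simp [pencilMap_apply]

theorem pencilMap_inj :
    pencilMap M₁ M₂ M₃ = pencilMap N₁ N₂ N₃ ↔ M₁ = N₁ ∧ M₂ = N₂ ∧ M₃ = N₃ := by
  refine ⟨fun h => ⟨?_, ?_, ?_⟩, by rintro ⟨rfl, rfl, rfl⟩; rfl⟩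
  · simpa [pencilMap_apply] using LinearMap.congr_fun h (Pi.single 0 1)
  · simpa [pencilMap_apply] using LinearMap.congr_fun h (Pi.single 1 1)
  · simpa [pencilMap_apply] using LinearMap.congr_fun h (Pi.single 2 1)

theorem isHermitian_pencilMap (h₁ : M₁.IsHermitian) (h₂ : M₂.IsHermitian) (h₃ : M₃.IsHermitian)
    (x : Fin 3 → ℝ) : (pencilMap M₁ M₂ M₃ x).IsHermitian := by
  rw [pencilMap_apply]
  exact ((h₁.smul (.all _)).add (h₂.smul (.all _))).add (h₃.smul (.all _))

theorem map_eval_pencil (M₁ M₂ M₃ : Matrix (Fin d) (Fin d) ℂ) (x : Fin 3 → ℝ) :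
    (pencil M₁ M₂ M₃).map (eval (toComplex x)) = pencilMap M₁ M₂ M₃ x := by
  ext i j
  simp [pencil, pencilMap_apply, toComplex]

theorem eval_sum_mul_pencil (a : Fin d → MvPolynomial (Fin 3) ℂ)
    (M₁ M₂ M₃ : Matrix (Fin d) (Fin d) ℂ) (x : Fin 3 → ℝ) (j : Fin d) :
    eval (toComplex x) (∑ i, a i * pencil M₁ M₂ M₃ i j) =
      ((fun i => eval (toComplex x) (a i)) ᵥ* pencilMap M₁ M₂ M₃ x) j := by
  rw [← map_eval_pencil, map_sum]
  exact Finset.sum_congr rfl fun i _ => map_mul _ _ _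

theorem map_starRingEnd_pencil (h₁ : M₁.IsHermitian) (h₂ : M₂.IsHermitian)
    (h₃ : M₃.IsHermitian) (i j : Fin d) :
    map (starRingEnd ℂ) (pencil M₁ M₂ M₃ i j) = pencil M₁ M₂ M₃ j i := by
  simp [pencil, ← h₁.apply j i, ← h₂.apply j i, ← h₃.apply j i]

theorem map_starRingEnd_complexify (f : MvPolynomial (Fin 3) ℝ) :
    map (starRingEnd ℂ) (complexify f) = complexify f := by
  rw [complexify, MvPolynomial.map_map]
  congr 2
  ext x
  simp

theorem sum_pencil_mul_map_starRingEnd (h₁ : M₁.IsHermitian) (h₂ : M₂.IsHermitian)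
    (h₃ : M₃.IsHermitian) {f : MvPolynomial (Fin 3) ℝ} {a : Fin d → MvPolynomial (Fin 3) ℂ}
    {i₀ : Fin d}
    (ha : ∀ j, ∑ i, a i * pencil M₁ M₂ M₃ i j = if j = i₀ then complexify f else 0) (i : Fin d) :
    ∑ j, pencil M₁ M₂ M₃ i j * map (starRingEnd ℂ) (a j) =
      if i = i₀ then complexify f else 0 := by
  have hconj := congrArg (map (starRingEnd ℂ)) (ha i)
  rw [map_sum, apply_ite (map (starRingEnd ℂ)), map_starRingEnd_complexify, map_zero] at hconj
  rw [← hconj]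
  refine Finset.sum_congr rfl fun j _ => ?_
  rw [map_mul, map_starRingEnd_pencil h₁ h₂ h₃, mul_comm]

theorem eval_vecMul_pencilMap {f : MvPolynomial (Fin 3) ℝ} {a : Fin d → MvPolynomial (Fin 3) ℂ}
    {i₀ : Fin d}
    (ha : ∀ j, ∑ i, a i * pencil M₁ M₂ M₃ i j = if j = i₀ then complexify f else 0)
    (x : Fin 3 → ℝ) :
    (fun i => eval (toComplex x) (a i)) ᵥ* pencilMap M₁ M₂ M₃ x =
      Pi.single i₀ ((eval x f : ℝ) : ℂ) := by
  ext j
  rw [← eval_sum_mul_pencil, ha j, Pi.single_apply, apply_ite (eval _), complexify,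
    eval_toComplex_map, map_zero]

theorem sum_mul_pencil_eq {V : Submodule ℝ (Fin 3 → ℝ)} (hV : V ≠ ⊤)
    {f : MvPolynomial (Fin 3) ℝ} {a : Fin d → MvPolynomial (Fin 3) ℂ} {i₀ : Fin d}
    (ha : ∀ x ∉ V, (fun i => eval (toComplex x) (a i)) ᵥ* pencilMap M₁ M₂ M₃ x =
      Pi.single i₀ ((eval x f : ℝ) : ℂ)) (j : Fin d) :
    ∑ i, a i * pencil M₁ M₂ M₃ i j = if j = i₀ then complexify f else 0 := by
  refine eq_of_eval_toComplex_eq_of_notMem hV fun x hx => ?_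
  rw [eval_sum_mul_pencil, ha x hx, Pi.single_apply, apply_ite (eval _), complexify,
    eval_toComplex_map, map_zero]

theorem complexify_eq_C_mul_det_pencil {V : Submodule ℝ (Fin 3 → ℝ)} (hV : V ≠ ⊤)
    {f : MvPolynomial (Fin 3) ℝ} {c : ℂ}
    (hdet : ∀ x ∉ V, ((eval x f : ℝ) : ℂ) = c * (pencilMap M₁ M₂ M₃ x).det) :
    complexify f = C c * (pencil M₁ M₂ M₃).det := by
  refine eq_of_eval_toComplex_eq_of_notMem hV fun x hx => ?_
  rw [complexify, eval_toComplex_map, hdet x hx, map_mul, eval_C, RingHom.map_det,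
    RingHom.mapMatrix_apply, map_eval_pencil]

namespace IsMomentPencil

variable {f : MvPolynomial (Fin 3) ℝ} {e : Fin 3 → ℝ} {a : Fin d → MvPolynomial (Fin 3) ℂ}
  {A : (Fin 3 → ℝ) →ₗ[ℝ] Matrix (Fin d) (Fin d) ℂ} {i₀ : Fin d}

theorem sum_mul_pencil_eq_of_pencilMap_eq (hA : IsMomentPencil f e a A)
    (hf : IsStrictlyHyperbolic f e d) (hd : 0 < d) (ha : ∀ j, (a j).IsHomogeneous (d - 1))
    (hpos : (A e).PosDef) (hi₀ : a i₀ = map (algebraMap ℝ ℂ) (dirDeriv e f))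
    (hM : pencilMap M₁ M₂ M₃ = normalizedPencil A e) (j : Fin d) :
    ∑ i, a i * pencil M₁ M₂ M₃ i j = if j = i₀ then complexify f else 0 := by
  refine sum_mul_pencil_eq (span_singleton_ne_top_fin_three e) (fun q hq => ?_) j
  rw [hM, hA.eval_vecMul_normalizedPencil hf hd ha (Fintype.card_fin d) hpos hi₀ hq]

theorem pencilMap_eq_of_sum_mul_pencil_eq (hA : IsMomentPencil f e a A)
    (hf : IsStrictlyHyperbolic f e d) (hd : 0 < d) (ha : ∀ j, (a j).IsHomogeneous (d - 1))
    (hpos : (A e).PosDef) (hi₀ : a i₀ = map (algebraMap ℝ ℂ) (dirDeriv e f))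
    (h₁ : M₁.IsHermitian) (h₂ : M₂.IsHermitian) (h₃ : M₃.IsHermitian)
    (haM : ∀ j, ∑ i, a i * pencil M₁ M₂ M₃ i j = if j = i₀ then complexify f else 0) :
    pencilMap M₁ M₂ M₃ = normalizedPencil A e := by
  have hspan := span_singleton_ne_top_fin_three e
  have haN := eval_vecMul_pencilMap (hA.sum_mul_pencil_eq_of_pencilMap_eq hf hd ha hpos hi₀
    (pencilMap_single (normalizedPencil A e)))
  rw [pencilMap_single] at haN
  refine sub_eq_zero.mp (hA.eq_zero_of_eval_vecMul_eq_zero hf hspan hd ha hpos (fun x =>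
    (isHermitian_pencilMap h₁ h₂ h₃ x).sub (hA.isHermitian_normalizedPencil hspan x)) fun x => ?_)
  rw [LinearMap.sub_apply, vecMul_sub, eval_vecMul_pencilMap haM, haN, sub_self]

theorem exists_complexify_eq_C_mul_det_pencil (hA : IsMomentPencil f e a A)
    (hf : IsStrictlyHyperbolic f e d) (hpos : (A e).PosDef)
    (hM : pencilMap M₁ M₂ M₃ = normalizedPencil A e) :
    ∃ c : ℝ, 0 < c ∧ complexify f = C (c : ℂ) * (pencil M₁ M₂ M₃).det := by
  obtain ⟨hre, him⟩ := Complex.pos_iff.mp hpos.det_pos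
  have hdet : ((A e).det.re : ℂ) = (A e).det := Complex.ext rfl him
  refine ⟨eval e f * (A e).det.re, mul_pos hf.eval_pos hre, complexify_eq_C_mul_det_pencil
    (span_singleton_ne_top_fin_three e) fun q hq => ?_⟩
  rw [Complex.ofReal_mul, hdet, hM,
    hA.eval_eq_mul_det_normalizedPencil hf (Fintype.card_fin d) hpos hq]

end IsMomentPencil

end Pencils

section CommonZeros

open MvPolynomial

theorem eval_map_restrictLine_eq_eval_complexify (f : MvPolynomial (Fin 3) ℝ) (e q : Fin 3 → ℝ)
    (t : ℂ) : ((restrictLine e q f).map Complex.ofRealHom).eval t =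
      eval (fun i => t * (e i : ℂ) + (q i : ℂ)) (complexify f) := by
  rw [complexify]
  induction f using MvPolynomial.induction_on <;> simp_all [restrictLine, mul_comm t]

theorem IsHyperbolic.splits_restrictLine {f : MvPolynomial (Fin 3) ℝ} {e : Fin 3 → ℝ}
    (hf : IsHyperbolic f e) (q : Fin 3 → ℝ) : (restrictLine e q f).Splits := by
  refine .of_splits_map Complex.ofRealHom (IsAlgClosed.splits _) fun t ht => ⟨t.re, ?_⟩
  have hroot := Polynomial.isRoot_of_mem_roots ht
  rw [Polynomial.IsRoot, eval_map_restrictLine_eq_eval_complexify] at hroot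
  exact Complex.ext rfl (hf.2 q t hroot).symm

theorem dirDeriv_fin_three {R : Type*} [CommSemiring R] (e : Fin 3 → R)
    (f : MvPolynomial (Fin 3) R) :
    dirDeriv e f = e 0 • pderiv 0 f + e 1 • pderiv 1 f + e 2 • pderiv 2 f := by
  simp only [dirDeriv, Fin.sum_univ_three, smul_eq_C_mul]

variable {S : Set (Fin 3 → ℂ)}

theorem toComplex_ne_smul_of_conj_disjoint
    (hconj : ∀ s ∈ S, ∀ s' ∈ S, ∀ c : ℂ, c ≠ 0 → s ≠ c • conjPt s') (p : Fin 3 → ℝ)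
    {s : Fin 3 → ℂ} (hs : s ∈ S ∪ conjPt '' S) {c : ℂ} (hc : c ≠ 0) : toComplex p ≠ c • s := by
  have hstar : star (toComplex p) = toComplex p := funext fun i => Complex.conj_ofReal (p i)
  have notMem {s : Fin 3 → ℂ} (hs : s ∈ S) {c : ℂ} (hc : c ≠ 0) : toComplex p ≠ c • s := by
    intro hp
    have hps : toComplex p = star c • conjPt s := by
      rw [← hstar, hp, star_smul]
      rfl
    refine hconj s hs s hs (c⁻¹ * star c) (mul_ne_zero (inv_ne_zero hc) (star_ne_zero.mpr hc)) ?_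
    rw [mul_smul, ← hps, hp, inv_smul_smul₀ hc]
  rcases hs with hs | ⟨s, hs, rfl⟩
  · exact notMem hs hc
  · intro hp
    refine notMem hs (star_ne_zero.mpr hc) ?_
    rw [← hstar, hp, star_smul]
    exact congrArg _ (star_star s)

theorem IsHyperbolic.isStrictlyHyperbolic {f : MvPolynomial (Fin 3) ℝ} {e : Fin 3 → ℝ} {d : ℕ}
    (hhyp : IsHyperbolic f e) (hf : f.IsHomogeneous d) (hfe : 0 < eval e f)
    (hsplit : ∀ q, q ≠ 0 → eval q (complexify f) = 0 → eval q (complexify (dirDeriv e f)) = 0 →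
      ∃ s ∈ S ∪ conjPt '' S, ∃ c : ℂ, c ≠ 0 ∧ q = c • s)
    (hconj : ∀ s ∈ S, ∀ s' ∈ S, ∀ c : ℂ, c ≠ 0 → s ≠ c • conjPt s') :
    IsStrictlyHyperbolic f e d where
  isHomogeneous := hf
  eval_pos := hfe
  splits := hhyp.splits_restrictLine
  eval_dirDeriv_ne_zero p hp hfp hgp := by
    have hp' : toComplex p ≠ 0 := fun h =>
      hp (funext fun i => Complex.ofReal_eq_zero.mp (congrFun h i))
    obtain ⟨s, hs, c, hc, hps⟩ := hsplit (toComplex p) hp'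
      (by rw [complexify, eval_toComplex_map, hfp, Complex.ofReal_zero])
      (by rw [complexify, eval_toComplex_map, hgp, Complex.ofReal_zero])
    exact toComplex_ne_smul_of_conj_disjoint hconj p hs hc hps

theorem eval_map_starRingEnd_mul_eq_zero {p r : MvPolynomial (Fin 3) ℂ} {m n : ℕ}
    (hp : p.IsHomogeneous m) (hr : r.IsHomogeneous n) (hpS : ∀ s ∈ S, eval s p = 0)
    (hrS : ∀ s ∈ S, eval s r = 0) {s : Fin 3 → ℂ} (hs : s ∈ S ∪ conjPt '' S) (c : ℂ) :
    eval (c • s) (map (starRingEnd ℂ) p * r) = 0 := by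
  rw [eval_smul_of_isHomogeneous ((hp.map _).mul hr), map_mul]
  rcases hs with hs | ⟨s, hs, rfl⟩
  · rw [hrS s hs, mul_zero, mul_zero]
  · have hps := eval_star_map_starRingEnd s p
    rw [hpS s hs, star_zero] at hps
    rw [show conjPt s = star s from rfl, hps, zero_mul, mul_zero]

end CommonZeros

/-- Theorem 1 of the paper. Let `f ∈ ℝ[x,y,z]` be homogeneous of
degree `d`, hyperbolic with respect to `e` with `f(e) > 0`, with smooth complex projective
curve, let `g = D_e f` be the directional derivative, suppose `f` and `g` intersect
transversally, split the common zeros as `S ∪ conj S`, and let `a` be a basis of the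
space of degree-`d-1` forms vanishing on `S` with `a₁ = g`. Then the linear system
`a ⬝ M = (f,0,…,0)`, `M ⬝ āᵀ = (f,0,…,0)ᵀ` has a unique Hermitian solution
`M = x M₁ + y M₂ + z M₃`, and this solution satisfies `f = c • det M` with `c > 0` and
`e₁M₁ + e₂M₂ + e₃M₃` positive definite. -/
theorem hermitian_determinantal_representation_algorithm
    {d : ℕ} (hd : 0 < d)
    (f : MvPolynomial (Fin 3) ℝ) (e : Fin 3 → ℝ)
    (hfhom : f.IsHomogeneous d)
    (hhyp : IsHyperbolic f e) (hfe : 0 < MvPolynomial.eval e f)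
    (hsmooth : ∀ p : Fin 3 → ℂ, p ≠ 0 →
      ¬ (MvPolynomial.eval p (complexify f) = 0 ∧
         ∀ i, MvPolynomial.eval p (MvPolynomial.pderiv i (complexify f)) = 0))
    (g : MvPolynomial (Fin 3) ℝ)
    (hg : g = e 0 • MvPolynomial.pderiv 0 f + e 1 • MvPolynomial.pderiv 1 f +
      e 2 • MvPolynomial.pderiv 2 f)
    (htrans : ∀ p : Fin 3 → ℂ, p ≠ 0 →
      MvPolynomial.eval p (complexify f) = 0 →
      MvPolynomial.eval p (complexify g) = 0 →
      LinearIndependent ℂ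
        ![fun i => MvPolynomial.eval p (MvPolynomial.pderiv i (complexify f)),
          fun i => MvPolynomial.eval p (MvPolynomial.pderiv i (complexify g))])
    (S : Set (Fin 3 → ℂ))
    (hS : ∀ s ∈ S, s ≠ 0 ∧ MvPolynomial.eval s (complexify f) = 0 ∧
      MvPolynomial.eval s (complexify g) = 0)
    (hSsplit : ∀ q : Fin 3 → ℂ, q ≠ 0 →
      MvPolynomial.eval q (complexify f) = 0 →
      MvPolynomial.eval q (complexify g) = 0 →
      ∃! s, s ∈ S ∪ conjPt '' S ∧ ∃ lam : ℂ, lam ≠ 0 ∧ q = lam • s)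
    (hSconj : ∀ s ∈ S, ∀ s' ∈ S, ∀ lam : ℂ, lam ≠ 0 → s ≠ lam • conjPt s')
    (a : Fin d → MvPolynomial (Fin 3) ℂ)
    (ha1 : a ⟨0, hd⟩ = complexify g)
    (hahom : ∀ i, (a i).IsHomogeneous (d - 1))
    (havan : ∀ i, ∀ s ∈ S, MvPolynomial.eval s (a i) = 0)
    (haindep : LinearIndependent ℂ a)
    (haspan : ∀ h : MvPolynomial (Fin 3) ℂ, h.IsHomogeneous (d - 1) →
      (∀ s ∈ S, MvPolynomial.eval s h = 0) → h ∈ Submodule.span ℂ (Set.range a)) :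
    (∃! T : Matrix (Fin d) (Fin d) ℂ × Matrix (Fin d) (Fin d) ℂ ×
        Matrix (Fin d) (Fin d) ℂ,
      T.1.IsHermitian ∧ T.2.1.IsHermitian ∧ T.2.2.IsHermitian ∧
      (∀ j, ∑ i, a i * pencil T.1 T.2.1 T.2.2 i j =
        if j = ⟨0, hd⟩ then complexify f else 0) ∧
      (∀ i, ∑ j, pencil T.1 T.2.1 T.2.2 i j * MvPolynomial.map (starRingEnd ℂ) (a j) =
        if i = ⟨0, hd⟩ then complexify f else 0)) ∧
    ∀ T : Matrix (Fin d) (Fin d) ℂ × Matrix (Fin d) (Fin d) ℂ ×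
        Matrix (Fin d) (Fin d) ℂ,
      T.1.IsHermitian → T.2.1.IsHermitian → T.2.2.IsHermitian →
      (∀ j, ∑ i, a i * pencil T.1 T.2.1 T.2.2 i j =
        if j = ⟨0, hd⟩ then complexify f else 0) →
      (∀ i, ∑ j, pencil T.1 T.2.1 T.2.2 i j * MvPolynomial.map (starRingEnd ℂ) (a j) =
        if i = ⟨0, hd⟩ then complexify f else 0) →
      (∃ c : ℝ, 0 < c ∧
        complexify f = MvPolynomial.C (c : ℂ) * (pencil T.1 T.2.1 T.2.2).det) ∧
      ((e 0 : ℂ) • T.1 + (e 1 : ℂ) • T.2.1 + (e 2 : ℂ) • T.2.2).PosDef := by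
  obtain rfl : g = dirDeriv e f := hg.trans (dirDeriv_fin_three e f).symm
  have hsplit q hq hfq hgq := (hSsplit q hq hfq hgq).exists
  have hf := hhyp.isStrictlyHyperbolic hfhom hfe hsplit hSconj
  have hspan := span_singleton_ne_top_fin_three e
  obtain ⟨A, hA⟩ := exists_isMomentPencil hf (hf.ne_zero hd) hahom fun i j ℓ hℓ =>
    exists_pow_mul_mem_span_pair (hfhom.map _) ((isHomogeneous_dirDeriv e hfhom).map _)
      (((hahom i).map _).mul (hahom j)) hℓ htrans fun q hq hfq hgq => by
        obtain ⟨s, hs, c, -, rfl⟩ := hsplit q hq hfq hgq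
        exact eval_map_starRingEnd_mul_eq_zero (hahom i) (hahom j) (havan i) (havan j) hs c
  have hpos := hA.posDef hf hspan hd hahom haindep
  have hN := hA.isHermitian_normalizedPencil hspan
  have hMap := pencilMap_single (normalizedPencil A e)
  have hsum := hA.sum_mul_pencil_eq_of_pencilMap_eq hf hd hahom hpos ha1 hMap
  refine ⟨⟨(_, _, _), ⟨hN _, hN _, hN _, hsum, sum_pencil_mul_map_starRingEnd (hN _) (hN _) (hN _)
    hsum⟩, fun T ⟨h₁, h₂, h₃, hT, _⟩ => ?_⟩, fun T h₁ h₂ h₃ hT _ => ?_⟩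
  · have hTmap := hA.pencilMap_eq_of_sum_mul_pencil_eq hf hd hahom hpos ha1 h₁ h₂ h₃ hT
    simpa only [Prod.ext_iff] using pencilMap_inj.mp (hTmap.trans hMap.symm)
  · have hTmap := hA.pencilMap_eq_of_sum_mul_pencil_eq hf hd hahom hpos ha1 h₁ h₂ h₃ hT
    refine ⟨hA.exists_complexify_eq_C_mul_det_pencil hf hpos hTmap, ?_⟩
    simpa only [← hTmap, pencilMap_apply] using! posDef_normalizedPencil hpos
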